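/- Fix integers d ≥ 7 and x = 1 + ⌈3d/2⌉. A set S of x points in P^3 belongs to T(3,d;x)' if and only if S is contained in a rational normal curve of P^3 (a twisted cubic). -/

import Mathlib

open MvPolynomial

noncomputable section

/-- Projective `n`-space over `k`, as the projectivization of `k^(n+1)`. -/
abbrev ProjSpace (k : Type*) [Field k] (n : ℕ) := Projectivization k (Fin (n+1) → k)

variable (k : Type*) [Field k]

/-- Evaluation at a vector, as a linear map on polynomials. -/
def evalLM {n : ℕ} (v : Fin n → k) : MvPolynomial (Fin n) k →ₗ[k] k :=
  (MvPolynomial.aeval v).toLinearMap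

/-- The submodule of polynomials vanishing together with all first partial derivatives at `v`. -/
def doubleVanishing {n : ℕ} (v : Fin n → k) : Submodule k (MvPolynomial (Fin n) k) :=
  LinearMap.ker (evalLM k v) ⊓
    ⨅ i : Fin n, LinearMap.ker ((evalLM k v).comp (MvPolynomial.pderiv i).toLinearMap)

/-- `h^0(I_{2S}(d))`: dimension of degree-`d` forms vanishing doubly at all points of `S`. -/
def h0 (n d : ℕ) (S : Finset (ProjSpace k n)) : ℕ :=
  Module.finrank k
    ↥(homogeneousSubmodule (Fin (n+1)) k d ⊓ ⨅ p ∈ S, doubleVanishing k p.rep)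

/-- `h^1(I_{2S}(d)) = h^0(I_{2S}(d)) + (n+1)#S - C(n+d,n)`. -/
def h1 (n d : ℕ) (S : Finset (ProjSpace k n)) : ℤ :=
  (h0 k n d S : ℤ) + (n+1) * S.card - (n+d).choose n

/-- `S` spans `P^n`: it is contained in no hyperplane. -/
def Spans (n : ℕ) (S : Finset (ProjSpace k n)) : Prop :=
  Submodule.span k (Projectivization.rep '' (S : Set (ProjSpace k n))) = ⊤

/-- The Terracini locus `T(n,d;x)`. -/
def Terracini (n d x : ℕ) : Set (Finset (ProjSpace k n)) :=
  {S | S.card = x ∧ Spans k n S ∧ 0 < h0 k n d S ∧ 0 < h1 k n d S}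

/-- The minimally Terracini locus `T(n,d;x)'`. -/
def minTerracini (n d x : ℕ) : Set (Finset (ProjSpace k n)) :=
  {S | S ∈ Terracini k n d x ∧ ∀ A : Finset (ProjSpace k n), A ⊂ S → h1 k n d A = 0}

end
/-- The `i`-th coordinate `s^(n-i) t^i` of the standard rational normal curve of degree `n`. -/
def stdRNCvec (k : Type*) [Field k] (n : ℕ) (s t : k) : Fin (n+1) → k :=
  fun i => s ^ (n - (i : ℕ)) * t ^ (i : ℕ)

/-- The standard rational normal curve in `P^n`: the image of
`[s:t] ↦ [s^n : s^(n-1)t : ⋯ : t^n]`. -/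
def stdRNC (k : Type*) [Field k] (n : ℕ) : Set (ProjSpace k n) :=
  {p | ∃ s t : k, (s ≠ 0 ∨ t ≠ 0) ∧
    Projectivization.submodule p = Submodule.span k {stdRNCvec k n s t}}

/-- A rational normal curve in `P^n`: a curve projectively equivalent to the standard one. -/
def IsRNC (k : Type*) [Field k] (n : ℕ) (C : Set (ProjSpace k n)) : Prop :=
  ∃ g : (Fin (n+1) → k) ≃ₗ[k] (Fin (n+1) → k),
    C = {p | ∃ s t : k, (s ≠ 0 ∨ t ≠ 0) ∧
      Projectivization.submodule p = Submodule.span k {g (stdRNCvec k n s t)}}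


open MvPolynomial

namespace Terr

open scoped Classical

noncomputable section

set_option linter.unusedSectionVars false

variable {k : Type*} [Field k] {n : ℕ} {ι : Type*}

/-- Directional derivative of `F` at `p` along `w`. -/
def dv (F : MvPolynomial (Fin n) k) (p w : Fin n → k) : k :=
  ∑ j, w j * eval p (pderiv j F)

lemma dv_add (F G : MvPolynomial (Fin n) k) (p w : Fin n → k) :
    dv (F + G) p w = dv F p w + dv G p w := by
  simp [dv, mul_add, Finset.sum_add_distrib]

lemma dv_mul (F G : MvPolynomial (Fin n) k) (p w : Fin n → k) :
    dv (F * G) p w = dv F p w * eval p G + eval p F * dv G p w := by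
  simp only [dv, Derivation.leibniz, map_add, smul_eq_mul, map_mul, Finset.mul_sum,
    Finset.sum_mul, ← Finset.sum_add_distrib]
  exact Finset.sum_congr rfl fun j _ => by ring

lemma dv_C (c : k) (p w : Fin n → k) : dv (C c) p w = 0 := by simp [dv]

lemma dv_smul (c : k) (F : MvPolynomial (Fin n) k) (p w : Fin n → k) :
    dv (c • F) p w = c * dv F p w := by
  rw [smul_eq_C_mul, dv_mul, dv_C]; simp

lemma dv_X (i : Fin n) (p w : Fin n → k) : dv (X i) p w = w i := by
  simp [dv, pderiv_X, Pi.single_apply, apply_ite]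

lemma dv_sum {κ : Type*} (s : Finset κ) (F : κ → MvPolynomial (Fin n) k) (p w : Fin n → k) :
    dv (∑ i ∈ s, F i) p w = ∑ i ∈ s, dv (F i) p w := by
  induction s using Finset.induction_on with
  | empty => simp [dv]
  | insert a s ha ih => rw [Finset.sum_insert ha, Finset.sum_insert ha, dv_add, ih]

lemma dv_add_right (F : MvPolynomial (Fin n) k) (p w w' : Fin n → k) :
    dv F p (w + w') = dv F p w + dv F p w' := by
  simp [dv, add_mul, Finset.sum_add_distrib]

lemma dv_smul_right (c : k) (F : MvPolynomial (Fin n) k) (p w : Fin n → k) :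
    dv F p (c • w) = c * dv F p w := by
  simp [dv, Finset.mul_sum, mul_assoc]

lemma dv_zero_right (F : MvPolynomial (Fin n) k) (p : Fin n → k) : dv F p 0 = 0 := by simp [dv]

lemma dv_self {F : MvPolynomial (Fin n) k} {e : ℕ} (hF : F.IsHomogeneous e) (p : Fin n → k) :
    dv F p p = e * eval p F := by
  have := congrArg (eval p) hF.sum_X_mul_pderiv
  simpa [dv] using this

/-- The polynomial of a linear form. -/
def lin (l : (Fin n → k) →ₗ[k] k) : MvPolynomial (Fin n) k :=
  ∑ j, C (l (Pi.single j 1)) * X j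

lemma lin_hom (l : (Fin n → k) →ₗ[k] k) : (lin l).IsHomogeneous 1 :=
  IsHomogeneous.sum _ _ _ fun _ _ => isHomogeneous_C_mul_X _ _

lemma lin_apply_aux (l : (Fin n → k) →ₗ[k] k) (v : Fin n → k) :
    ∑ j, l (Pi.single j 1) * v j = l v := by
  conv_rhs => rw [LinearMap.pi_apply_eq_sum_univ l v]
  refine Finset.sum_congr rfl fun j _ => ?_
  rw [smul_eq_mul, mul_comm]
  congr 2
  ext i
  simp [Pi.single_apply, eq_comm]

lemma eval_lin (l : (Fin n → k) →ₗ[k] k) (p : Fin n → k) : eval p (lin l) = l p := by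
  rw [← lin_apply_aux l p]; simp [lin]

lemma dv_lin (l : (Fin n → k) →ₗ[k] k) (p w : Fin n → k) : dv (lin l) p w = l w := by
  rw [← lin_apply_aux l w, lin, dv_sum]
  exact Finset.sum_congr rfl fun j _ => by rw [dv_mul, dv_C, dv_X]; simp

/-- Residual of a component at `p` with respect to the form `G`. -/
def cres (G : MvPolynomial (Fin n) k) (p : Fin n → k) (z : k × (Fin n → k)) :
    k × (Fin n → k) :=
  (z.1 * eval p G + dv G p z.2, eval p G • z.2)

/-- Degree of a component. -/
def cdeg (z : k × (Fin n → k)) : ℕ := if z.2 ≠ 0 then 2 else if z.1 ≠ 0 then 1 else 0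

/-- Degree of the intersection of a component with a linear subspace. -/
def cdl (L : Submodule k (Fin n → k)) (p : Fin n → k) (z : k × (Fin n → k)) : ℕ :=
  if z.2 ≠ 0 then (if p ∈ L then (if z.2 ∈ L then 2 else 1) else 0)
  else if z.1 ≠ 0 then (if p ∈ L then 1 else 0) else 0

def res (G : MvPolynomial (Fin n) k) (p : ι → Fin n → k) (Z : ι → k × (Fin n → k)) :
    ι → k × (Fin n → k) := fun i => cres G (p i) (Z i)

variable [Fintype ι]

def D (Z : ι → k × (Fin n → k)) : ℕ := ∑ i, cdeg (Z i)

def dl (L : Submodule k (Fin n → k)) (p : ι → Fin n → k) (Z : ι → k × (Fin n → k)) : ℕ :=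
  ∑ i, cdl L (p i) (Z i)

/-- A relation in degree `e`. -/
def Rel (e : ℕ) (p : ι → Fin n → k) (Z : ι → k × (Fin n → k)) : Prop :=
  ∀ F : MvPolynomial (Fin n) k, F.IsHomogeneous e →
    ∑ i, ((Z i).1 * eval (p i) F + dv F (p i) (Z i).2) = 0

/-- Validity: points are distinct, tangent vectors are non-radial. -/
structure Valid (p : ι → Fin n → k) (Z : ι → k × (Fin n → k)) : Prop where
  ne : ∀ i, p i ≠ 0
  nonprop : ∀ i j, i ≠ j → p j ∉ Submodule.span k {p i}
  tang : ∀ i, (Z i).2 ≠ 0 → (Z i).2 ∉ Submodule.span k {p i}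

lemma Rel.res {e m : ℕ} {p : ι → Fin n → k} {Z : ι → k × (Fin n → k)}
    (h : Rel (e + m) p Z) {G : MvPolynomial (Fin n) k} (hG : G.IsHomogeneous m) :
    Rel e p (res G p Z) := by
  intro F hF
  rw [← h (F * G) (hF.mul hG)]
  refine Finset.sum_congr rfl fun i _ => ?_
  simp only [Terr.res, cres, dv_mul, map_mul, dv_smul_right]
  ring

lemma Valid.res {p : ι → Fin n → k} {Z : ι → k × (Fin n → k)} (h : Valid p Z)
    (G : MvPolynomial (Fin n) k) : Valid p (res G p Z) := by
  refine ⟨h.ne, h.nonprop, fun i hi hm => ?_⟩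
  simp only [Terr.res, cres] at hi hm
  have h1 : eval (p i) G ≠ 0 := fun h0 => hi (by simp [h0])
  have h2 : (Z i).2 ≠ 0 := fun h0 => hi (by simp [h0])
  exact h.tang i h2 ((Submodule.smul_mem_iff _ h1).1 hm)

end

end Terr

open MvPolynomial

namespace Terr

open scoped Classical

noncomputable section

set_option linter.unusedSectionVars false

variable {k : Type*} [Field k] {n : ℕ} {ι : Type*}

lemma cdl_le_cdeg (L : Submodule k (Fin n → k)) (p : Fin n → k) (z : k × (Fin n → k)) :
    cdl L p z ≤ cdeg z := by
  unfold cdl cdeg; split_ifs <;> omega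

lemma cdl_mono {L L' : Submodule k (Fin n → k)} (h : L ≤ L') (p : Fin n → k)
    (z : k × (Fin n → k)) : cdl L p z ≤ cdl L' p z := by
  unfold cdl
  have h1 := @h p
  have h2 := @h z.2
  split_ifs <;> first | omega | (exfalso; tauto)

lemma cdl_top (p : Fin n → k) (z : k × (Fin n → k)) : cdl ⊤ p z = cdeg z := by
  simp [cdl, cdeg]

lemma cdeg_res_lin (l : (Fin n → k) →ₗ[k] k) (p : Fin n → k) (z : k × (Fin n → k)) :
    cdeg (cres (lin l) p z) + cdl (LinearMap.ker l) p z = cdeg z := by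
  unfold cdeg cdl cres
  simp only [eval_lin, dv_lin, LinearMap.mem_ker]
  by_cases hw : z.2 = 0 <;> by_cases ha : z.1 = 0 <;> by_cases hp : l p = 0 <;>
    by_cases hlw : l z.2 = 0 <;> simp_all

lemma cdl_res (L : Submodule k (Fin n → k)) (G : MvPolynomial (Fin n) k) (p : Fin n → k)
    (z : k × (Fin n → k)) : cdl L p (cres G p z) ≤ cdl L p z := by
  unfold cdl cres
  by_cases hw : z.2 = 0 <;> by_cases ha : z.1 = 0 <;> by_cases hp : eval p G = 0 <;>
    by_cases hL : p ∈ L <;> by_cases hwL : z.2 ∈ L <;>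
    simp_all [dv_zero_right, Submodule.smul_mem_iff] <;> split_ifs <;> omega

lemma cdeg_res_le (G : MvPolynomial (Fin n) k) (p : Fin n → k)
    (z : k × (Fin n → k)) : cdeg (cres G p z) ≤ cdeg z := by
  rw [← cdl_top p, ← cdl_top p]; exact cdl_res _ _ _ _

lemma cres_comm (G H : MvPolynomial (Fin n) k) (p : Fin n → k)
    (z : k × (Fin n → k)) : cres G p (cres H p z) = cres H p (cres G p z) := by
  unfold cres
  ext
  · simp only [dv_smul_right]; ring
  · simp only [Pi.smul_apply, smul_eq_mul]; ring

lemma cdeg_eq_zero {z : k × (Fin n → k)} : cdeg z = 0 ↔ z = 0 := by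
  unfold cdeg; rw [Prod.ext_iff]
  by_cases hw : z.2 = 0 <;> by_cases ha : z.1 = 0 <;> simp_all

lemma cdeg_two_res (q G : MvPolynomial (Fin n) k) (p : Fin n → k)
    (z : k × (Fin n → k)) (h : cdeg (cres q p (cres G p z)) = 0) :
    cdeg (cres q p z) + cdeg (cres G p z) ≤ cdeg z := by
  rw [cdeg_eq_zero] at h
  unfold cres at *
  rw [Prod.ext_iff] at h
  unfold cdeg
  by_cases hw : z.2 = 0 <;> by_cases ha : z.1 = 0 <;> by_cases hG : eval p G = 0 <;>
    by_cases hq : eval p q = 0 <;> by_cases hdq : dv q p z.2 = 0 <;>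
    by_cases hdG : dv G p z.2 = 0 <;>
    simp_all [dv_zero_right, dv_smul_right]

lemma mem_of_cdl {L : Submodule k (Fin n → k)} {p : Fin n → k} {z : k × (Fin n → k)}
    (h : 0 < cdl L p z) : p ∈ L := by
  unfold cdl at h
  split_ifs at h <;> first | assumption | omega

lemma mem_of_cdl_two {L : Submodule k (Fin n → k)} {p : Fin n → k} {z : k × (Fin n → k)}
    (h : cdl L p z = cdeg z) : z.2 ∈ L := by
  unfold cdl cdeg at h
  by_cases hw : z.2 = 0
  · simp [hw]
  · simp only [ne_eq, hw, not_false_eq_true, if_true] at h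
    split_ifs at h <;> first | assumption | omega

lemma cdeg_le_two (z : k × (Fin n → k)) : cdeg z ≤ 2 := by
  unfold cdeg; split_ifs <;> omega

lemma res_comm (G H : MvPolynomial (Fin n) k) (p : ι → Fin n → k)
    (Z : ι → k × (Fin n → k)) : res G p (res H p Z) = res H p (res G p Z) :=
  funext fun _ => cres_comm _ _ _ _

variable [Fintype ι] {p : ι → Fin n → k} {Z : ι → k × (Fin n → k)}

lemma dl_le_D (L : Submodule k (Fin n → k)) (p : ι → Fin n → k) (Z : ι → k × (Fin n → k)) :
    dl L p Z ≤ D Z := Finset.sum_le_sum fun _ _ => cdl_le_cdeg _ _ _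

lemma dl_mono {L L' : Submodule k (Fin n → k)} (h : L ≤ L') (p : ι → Fin n → k)
    (Z : ι → k × (Fin n → k)) : dl L p Z ≤ dl L' p Z :=
  Finset.sum_le_sum fun _ _ => cdl_mono h _ _

lemma D_res_lin (l : (Fin n → k) →ₗ[k] k) (p : ι → Fin n → k) (Z : ι → k × (Fin n → k)) :
    D (res (lin l) p Z) + dl (LinearMap.ker l) p Z = D Z := by
  unfold D dl
  rw [← Finset.sum_add_distrib]
  exact Finset.sum_congr rfl fun i _ => cdeg_res_lin _ _ _

lemma dl_res (L : Submodule k (Fin n → k)) (G : MvPolynomial (Fin n) k) (p : ι → Fin n → k)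
    (Z : ι → k × (Fin n → k)) : dl L p (res G p Z) ≤ dl L p Z :=
  Finset.sum_le_sum fun _ _ => cdl_res _ _ _ _

lemma D_res_le (G : MvPolynomial (Fin n) k) (p : ι → Fin n → k)
    (Z : ι → k × (Fin n → k)) : D (res G p Z) ≤ D Z :=
  Finset.sum_le_sum fun _ _ => cdeg_res_le _ _ _

lemma D_eq_zero : D Z = 0 ↔ ∀ i, Z i = 0 := by
  unfold D; simp [Finset.sum_eq_zero_iff, cdeg_eq_zero]

lemma D_two_res (q G : MvPolynomial (Fin n) k) (p : ι → Fin n → k)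
    (Z : ι → k × (Fin n → k)) (h : D (res q p (res G p Z)) = 0) :
    D (res q p Z) + D (res G p Z) ≤ D Z := by
  rw [D_eq_zero] at h
  unfold D
  rw [← Finset.sum_add_distrib]
  exact Finset.sum_le_sum fun i _ => cdeg_two_res _ _ _ _ (cdeg_eq_zero.2 (h i))

lemma cdl_eq_of_dl_eq {L : Submodule k (Fin n → k)} (h : dl L p Z = D Z) (i : ι) :
    cdl L (p i) (Z i) = cdeg (Z i) := by
  unfold dl D at h
  exact (Finset.sum_eq_sum_iff_of_le fun i _ => cdl_le_cdeg L (p i) (Z i)).1 h i (Finset.mem_univ _)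

lemma dl_eq_iff {L : Submodule k (Fin n → k)} : dl L p Z = D Z ↔
    ∀ i, cdl L (p i) (Z i) = cdeg (Z i) :=
  ⟨cdl_eq_of_dl_eq, fun h => Finset.sum_congr rfl fun i _ => h i⟩

/-- generic hyperplane through a proper subspace -/
lemma exists_generic [Infinite k] {L : Submodule k (Fin n → k)} (hL : L ≠ ⊤) (T : Finset (Fin n → k))
    (hT : ∀ v ∈ T, v ∉ L) :
    ∃ l : (Fin n → k) →ₗ[k] k, l ≠ 0 ∧ L ≤ LinearMap.ker l ∧ ∀ v ∈ T, l v ≠ 0 := by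
  obtain ⟨v0, hv0⟩ : ∃ v, v ∉ L := by
    by_contra! h; exact hL (eq_top_iff.2 fun v _ => h v)
  let T' : Finset (Fin n → k) := insert v0 T
  have hT' : ∀ v ∈ T', v ∉ L := by
    intro v hv
    rcases Finset.mem_insert.1 hv with rfl | hv
    · exact hv0
    · exact hT v hv
  obtain ⟨f, hf, hf'⟩ := Module.Dual.exists_forall_mem_ne_zero_of_forall_exists
    (K := k) (M := Module.Dual k (Fin n → k)) L.dualAnnihilator
    (fun v : T' => Module.Dual.eval k (Fin n → k) v.1) (by
      intro v
      obtain ⟨f, hf, hf'⟩ := Submodule.exists_dual_map_eq_bot_of_notMem (hT' v.1 v.2) inferInstance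
      refine ⟨f, (Submodule.mem_dualAnnihilator f).2 fun w hw => ?_, by simpa using hf⟩
      have : f w ∈ L.map f := Submodule.mem_map_of_mem hw
      rw [hf'] at this
      exact (Submodule.mem_bot k).1 this)
  refine ⟨f, ?_, ?_, fun v hv => ?_⟩
  · rintro rfl
    exact hf' ⟨v0, Finset.mem_insert_self _ _⟩ (by simp)
  · intro w hw
    exact (Submodule.mem_dualAnnihilator f).1 hf w hw
  · simpa using hf' ⟨v, Finset.mem_insert_of_mem hv⟩

lemma generic_dl [Infinite k] {L : Submodule k (Fin n → k)} (hL : L ≠ ⊤)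
    (p : ι → Fin n → k) (Z : ι → k × (Fin n → k)) (T : Finset (Fin n → k))
    (hT : ∀ v ∈ T, v ∉ L) :
    ∃ l : (Fin n → k) →ₗ[k] k, l ≠ 0 ∧ L ≤ LinearMap.ker l ∧
      dl (LinearMap.ker l) p Z = dl L p Z ∧ ∀ v ∈ T, l v ≠ 0 := by
  obtain ⟨l, h1, h2, h3⟩ := exists_generic hL
    ((Finset.univ.image p ∪ Finset.univ.image fun i => (Z i).2).filter (fun v => v ∉ L) ∪ T)
    (by intro v hv; rcases Finset.mem_union.1 hv with hv | hv
        · exact (Finset.mem_filter.1 hv).2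
        · exact hT v hv)
  refine ⟨l, h1, h2, ?_, fun v hv => h3 v (Finset.mem_union_right _ hv)⟩
  refine le_antisymm (Finset.sum_le_sum fun i _ => ?_) (dl_mono h2 _ _)
  have e1 : p i ∈ LinearMap.ker l → p i ∈ L := by
    intro h; by_contra h'
    exact h3 (p i) (by simp [h']) h
  have e2 : (Z i).2 ∈ LinearMap.ker l → (Z i).2 ∈ L := by
    intro h; by_contra h'
    exact h3 (Z i).2 (by simp [h']) h
  unfold cdl
  split_ifs <;> first | omega | (exfalso; tauto)

/-- existence of a smaller degree function of prescribed sum -/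
lemma exists_sub_sum (g : ι → ℕ) (m : ℕ) (h : m ≤ ∑ i, g i) :
    ∃ f : ι → ℕ, (∀ i, f i ≤ g i) ∧ ∑ i, f i = m := by
  induction m with
  | zero => exact ⟨0, fun i => Nat.zero_le _, by simp⟩
  | succ m ih =>
    obtain ⟨f, hf, hs⟩ := ih (by omega)
    obtain ⟨i, -, hi⟩ : ∃ i ∈ Finset.univ, f i < g i := by
      apply Finset.exists_lt_of_sum_lt; omega
    refine ⟨f + Pi.single i 1, fun j => ?_, ?_⟩
    · by_cases hj : j = i
      · subst hj; simp; omega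
      · simp [hj, hf j]
    · simp [Finset.sum_add_distrib, hs]

/-- subspace attached to a degree function -/
lemma pick (p : ι → Fin n → k) (Z : ι → k × (Fin n → k)) (f : ι → ℕ) (hf : ∀ i, f i ≤ cdeg (Z i)) :
    ∃ U : Submodule k (Fin n → k), Module.finrank k U ≤ ∑ i, f i ∧
      ∀ i, f i ≤ cdl U (p i) (Z i) := by
  let v : (Σ i, Fin (f i)) → (Fin n → k) := fun x => if x.2.1 = 0 then p x.1 else (Z x.1).2
  refine ⟨Submodule.span k (Set.range v), ?_, fun i => ?_⟩
  · refine (finrank_range_le_card v).trans ?_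
    simp
  · have h1 : 1 ≤ f i → p i ∈ Submodule.span k (Set.range v) := fun h =>
      Submodule.subset_span ⟨⟨i, ⟨0, h⟩⟩, by simp [v]⟩
    have h2 : 2 ≤ f i → (Z i).2 ∈ Submodule.span k (Set.range v) := fun h =>
      Submodule.subset_span ⟨⟨i, ⟨1, h⟩⟩, by simp [v]⟩
    have h3 := hf i
    unfold cdl
    unfold cdeg at h3
    split_ifs at * <;> first | omega | (by_contra hc; first | (have := h1 (by omega); tauto) | (have := h2 (by omega); tauto))

lemma pick_sum (p : ι → Fin n → k) (Z : ι → k × (Fin n → k)) (m : ℕ) (hm : m ≤ D Z) :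
    ∃ U : Submodule k (Fin n → k), Module.finrank k U ≤ m ∧ m ≤ dl U p Z := by
  obtain ⟨f, hf, hs⟩ := exists_sub_sum (fun i => cdeg (Z i)) m hm
  obtain ⟨U, hU, hU'⟩ := pick p Z f hf
  refine ⟨U, hs ▸ hU, ?_⟩
  rw [← hs]
  exact Finset.sum_le_sum fun i _ => hU' i

/-- forms of prescribed contact from a big space of forms -/
lemma pick_form (p : ι → Fin n → k) (Z : ι → k × (Fin n → k)) (f : ι → ℕ)
    (hf : ∀ i, f i ≤ cdeg (Z i)) (W : Submodule k (MvPolynomial (Fin n) k))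
    [FiniteDimensional k W] (hW : ∑ i, f i < Module.finrank k W) :
    ∃ G ∈ W, G ≠ 0 ∧ ∀ i, cdeg (cres G (p i) (Z i)) + f i ≤ cdeg (Z i) := by
  let φ : W →ₗ[k] ((Σ i, Fin (f i)) → k) :=
    { toFun := fun G x => if x.2.1 = 0 then eval (p x.1) G.1 else dv G.1 (p x.1) (Z x.1).2
      map_add' := by
        intro G H; ext x; simp only [Submodule.coe_add, map_add, dv_add, Pi.add_apply]
        split_ifs <;> rfl
      map_smul' := by
        intro c G; ext x
        simp only [SetLike.val_smul, smul_eval, dv_smul, Pi.smul_apply, RingHom.id_apply, smul_eq_mul]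
        split_ifs <;> rfl }
  have hker : LinearMap.ker φ ≠ ⊥ := LinearMap.ker_ne_bot_of_finrank_lt (by simpa using hW)
  obtain ⟨G, hG, hG0⟩ := Submodule.exists_mem_ne_zero_of_ne_bot hker
  refine ⟨G.1, G.2, by simpa using hG0, fun i => ?_⟩
  have h1 : 1 ≤ f i → eval (p i) G.1 = 0 := fun h => by
    simpa [φ] using congrFun hG ⟨i, ⟨0, h⟩⟩
  have h2 : 2 ≤ f i → dv G.1 (p i) (Z i).2 = 0 := fun h => by
    simpa [φ] using congrFun hG ⟨i, ⟨1, h⟩⟩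
  have h3 := hf i
  have h4 := cdeg_le_two (Z i)
  have h5 := cdeg_res_le G.1 (p i) (Z i)
  rcases Nat.lt_or_ge (f i) 1 with h | h
  · omega
  · have e1 := h1 h
    have h6 : cdeg (cres G.1 (p i) (Z i)) ≤ 1 := by
      simp only [cdeg, cres, e1]; simp; split_ifs <;> omega
    rcases Nat.lt_or_ge (f i) 2 with h' | h'
    · have : (Z i).2 = 0 → cdeg (cres G.1 (p i) (Z i)) = 0 := by
        intro hz; simp [cdeg, cres, e1, hz, dv_zero_right]
      by_cases hz : (Z i).2 = 0
      · have := this hz; omega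
      · have : cdeg (Z i) = 2 := by simp [cdeg, hz]
        omega
    · have : cdeg (cres G.1 (p i) (Z i)) = 0 := by
        simp [cdeg, cres, e1, h2 h']
      omega

end

end Terr

open MvPolynomial

namespace Terr

open scoped Classical

noncomputable section

set_option linter.unusedSectionVars false

variable {k : Type*} [Field k] [Infinite k] {n : ℕ} {ι : Type*} [Fintype ι]

lemma ne_top_of_finrank {L : Submodule k (Fin n → k)} (h : Module.finrank k L < n) : L ≠ ⊤ := by
  rintro rfl
  rw [finrank_top, Module.finrank_fin_fun] at h
  omega

lemma exists_max (p : ι → Fin n → k) (Z : ι → k × (Fin n → k))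
    (P : ((Fin n → k) →ₗ[k] k) → Prop) (hP : ∃ l, P l) :
    ∃ l, P l ∧ ∀ l', P l' → dl (LinearMap.ker l') p Z ≤ dl (LinearMap.ker l) p Z := by
  by_contra! hc
  have key : ∀ m : ℕ, ∃ l, P l ∧ m ≤ dl (LinearMap.ker l) p Z := by
    intro m
    induction m with
    | zero => obtain ⟨l, hl⟩ := hP; exact ⟨l, hl, Nat.zero_le _⟩
    | succ m ih =>
      obtain ⟨l, hl, hm⟩ := ih
      obtain ⟨l', hl', h⟩ := hc l hl
      exact ⟨l', hl', by omega⟩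
  obtain ⟨l, -, h⟩ := key (D Z + 1)
  have := dl_le_D (LinearMap.ker l) p Z
  omega

lemma lemma0 (hn : 2 ≤ n) {p : ι → Fin n → k} (e : ℕ) : ∀ {Z : ι → k × (Fin n → k)}, Valid p Z →
    Rel e p Z → 0 < D Z → e + 2 ≤ D Z := by
  induction e with
  | zero =>
    intro Z hv hr hD
    by_contra hlt
    have hD1 : D Z = 1 := by omega
    obtain ⟨i, -, hi⟩ : ∃ i ∈ Finset.univ, 0 < cdeg (Z i) := by
      by_contra! h
      have : D Z = 0 := Finset.sum_eq_zero fun i hi => by have := h i hi; omega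
      omega
    have hsplit : cdeg (Z i) + ∑ j ∈ Finset.univ.erase i, cdeg (Z j) = 1 := by
      rw [Finset.add_sum_erase _ (fun j => cdeg (Z j)) (Finset.mem_univ i)]; exact hD1
    have hz : ∀ j, j ≠ i → Z j = 0 := by
      intro j hj
      have h0 : ∑ j ∈ Finset.univ.erase i, cdeg (Z j) = 0 := by omega
      exact cdeg_eq_zero.1 (Finset.sum_eq_zero_iff.1 h0 j (by simp [hj]))
    have hi1 : cdeg (Z i) = 1 := by omega
    have hr1 := hr 1 (isHomogeneous_one _ _)
    rw [Finset.sum_eq_single i (by intro j _ hj; simp [hz j hj, dv_zero_right]) (by simp)] at hr1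
    have : dv (1 : MvPolynomial (Fin n) k) (p i) (Z i).2 = 0 := by
      rw [← C_1, dv_C]
    unfold cdeg at hi1
    rw [this] at hr1
    have hz1 : (Z i).1 = 0 := by simpa using hr1
    simp [hz1] at hi1
    split_ifs at hi1 <;> omega
  | succ e ih =>
    intro Z hv hr hD
    have hbot : (⊥ : Submodule k (Fin n → k)) ≠ ⊤ := ne_top_of_finrank (by simp; omega)
    obtain ⟨l, hl, -, h2, -⟩ := generic_dl hbot p Z ∅ (by simp)
    have h3 : dl ⊥ p Z = 0 := Finset.sum_eq_zero fun i _ => by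
      by_contra h
      exact hv.ne i (by simpa using mem_of_cdl (Nat.pos_of_ne_zero h))
    have h4 := D_res_lin l p Z
    have h5 := ih (hv.res (lin l)) (hr.res (lin_hom l)) (by omega)
    obtain ⟨i, -, hi⟩ : ∃ i ∈ Finset.univ, 0 < cdeg (Z i) := by
      by_contra! h
      have : D Z = 0 := Finset.sum_eq_zero fun i hi => by have := h i hi; omega
      omega
    have hL : Submodule.span k {p i} ≠ ⊤ := ne_top_of_finrank (by
      rw [finrank_span_singleton (hv.ne i)]; omega)
    obtain ⟨l', hl', -, h2', -⟩ := generic_dl hL p Z ∅ (by simp)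
    have h3' : dl (Submodule.span k {p i}) p Z = 1 := by
      unfold dl
      rw [Finset.sum_eq_single i]
      · have hp : p i ∈ Submodule.span k {p i} := Submodule.mem_span_singleton_self _
        have ht := hv.tang i
        unfold cdl; unfold cdeg at hi
        split_ifs at * <;> first | rfl | omega | (exfalso; tauto)
      · intro j _ hj
        by_contra h
        exact hv.nonprop i j (Ne.symm hj) (mem_of_cdl (Nat.pos_of_ne_zero h))
      · simp
    have h4' := D_res_lin l' p Z
    have h5' := ih (hv.res (lin l')) (hr.res (lin_hom l')) (by omega)
    omega

lemma lemma1 (hn : 3 ≤ n) {p : ι → Fin n → k} (e : ℕ) : ∀ {Z : ι → k × (Fin n → k)}, Valid p Z →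
    Rel e p Z → D Z ≤ 2 * e + 1 → ∃ L : Submodule k (Fin n → k), Module.finrank k L ≤ 2 ∧
      dl L p Z = D Z := by
  induction e with
  | zero =>
    intro Z hv hr hD
    refine ⟨⊥, by simp, ?_⟩
    have h0 : D Z = 0 := by
      by_contra h
      have := lemma0 (by omega) 0 hv hr (by omega)
      omega
    have := dl_le_D ⊥ p Z
    omega
  | succ e ih =>
    intro Z hv hr hD
    by_contra! hc
    have hlt : ∀ L : Submodule k (Fin n → k), Module.finrank k L ≤ 2 → dl L p Z < D Z :=
      fun L hL => lt_of_le_of_ne (dl_le_D _ _ _) (hc L hL)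
    have h0 : 0 < D Z := by
      have := hlt ⊥ (by simp); omega
    have h2 := lemma0 (by omega) _ hv hr h0
    obtain ⟨U, hU, hU2⟩ := pick_sum p Z 2 (by omega)
    obtain ⟨l0, hl0, -, h3, -⟩ := generic_dl (ne_top_of_finrank (by omega : Module.finrank k U < n))
      p Z ∅ (by simp)
    have hUlt := hlt U hU
    obtain ⟨l, ⟨hl, hlD⟩, hmax⟩ := exists_max p Z
      (fun l => l ≠ 0 ∧ dl (LinearMap.ker l) p Z < D Z) ⟨l0, hl0, by omega⟩
    have hm0 := hmax l0 ⟨hl0, by omega⟩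
    have hres := D_res_lin l p Z
    obtain ⟨L, hL, hLd⟩ := ih (hv.res (lin l)) (hr.res (lin_hom l)) (by omega)
    have h4 := lemma0 (by omega) _ (hv.res (lin l)) (hr.res (lin_hom l)) (by omega)
    have h5 := dl_res L (lin l) p Z
    obtain ⟨l1, hl1, -, h6, -⟩ := generic_dl (ne_top_of_finrank (by omega : Module.finrank k L < n))
      p Z ∅ (by simp)
    have h7 := hlt L hL
    have hm1 := hmax l1 ⟨hl1, by omega⟩
    omega

lemma extra {p : ι → Fin 4 → k} {Z : ι → k × (Fin 4 → k)}
    {L : Submodule k (Fin 4 → k)} (hL : Module.finrank k L ≤ 2) (hlt : dl L p Z < D Z) :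
    ∃ l : (Fin 4 → k) →ₗ[k] k, l ≠ 0 ∧ L ≤ LinearMap.ker l ∧
      dl L p Z + 1 ≤ dl (LinearMap.ker l) p Z := by
  obtain ⟨i, -, hi⟩ : ∃ i ∈ Finset.univ, cdl L (p i) (Z i) < cdeg (Z i) :=
    Finset.exists_lt_of_sum_lt hlt
  obtain ⟨v, hv⟩ : ∃ v, cdl L (p i) (Z i) < cdl (L ⊔ Submodule.span k {v}) (p i) (Z i) := by
    by_cases hp : p i ∈ L
    · refine ⟨(Z i).2, ?_⟩
      have h1 : p i ∈ L ⊔ Submodule.span k {(Z i).2} := Submodule.mem_sup_left hp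
      have h2 : (Z i).2 ∈ L ⊔ Submodule.span k {(Z i).2} :=
        Submodule.mem_sup_right (Submodule.mem_span_singleton_self _)
      unfold cdl at *; unfold cdeg at hi
      split_ifs at * <;> first | omega | tauto
    · refine ⟨p i, ?_⟩
      have h1 : p i ∈ L ⊔ Submodule.span k {p i} :=
        Submodule.mem_sup_right (Submodule.mem_span_singleton_self _)
      unfold cdl at *; unfold cdeg at hi
      split_ifs at * <;> first | omega | tauto
  have hfin : Module.finrank k ↥(L ⊔ Submodule.span k {v}) < 4 := by
    have h1 := Submodule.finrank_add_le_finrank_add_finrank L (Submodule.span k {v})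
    have h2 : Module.finrank k (Submodule.span k {v}) ≤ 1 := by
      simpa using finrank_span_le_card (R := k) ({v} : Set (Fin 4 → k))
    omega
  obtain ⟨l, hl, h1, h2, -⟩ := generic_dl (ne_top_of_finrank hfin) p Z ∅ (by simp)
  refine ⟨l, hl, le_trans le_sup_left h1, ?_⟩
  rw [h2]
  refine Finset.sum_lt_sum (fun j _ => cdl_mono le_sup_left _ _) ⟨i, Finset.mem_univ _, hv⟩

/-- every planar section is a proper one -/
def NonPlanar (p : ι → Fin n → k) (Z : ι → k × (Fin n → k)) : Prop :=
  ∀ l : (Fin n → k) →ₗ[k] k, l ≠ 0 → dl (LinearMap.ker l) p Z < D Z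

lemma NonPlanar.line {p : ι → Fin 4 → k} {Z : ι → k × (Fin 4 → k)} (h : NonPlanar p Z)
    {L : Submodule k (Fin 4 → k)} (hL : Module.finrank k L ≤ 3) : dl L p Z < D Z := by
  obtain ⟨l, hl, h1, h2, -⟩ := generic_dl
    (ne_top_of_finrank (by omega : Module.finrank k L < 4)) p Z ∅ (by simp)
  rw [← h2]; exact h l hl

lemma NonPlanar.extra {p : ι → Fin 4 → k} {Z : ι → k × (Fin 4 → k)} (h : NonPlanar p Z)
    {L : Submodule k (Fin 4 → k)} (hL : Module.finrank k L ≤ 2) {m : ℕ}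
    (hm : ∀ l : (Fin 4 → k) →ₗ[k] k, l ≠ 0 → dl (LinearMap.ker l) p Z ≤ m) : dl L p Z + 1 ≤ m := by
  obtain ⟨l, hl, -, h2⟩ := Terr.extra hL (h.line (by omega : Module.finrank k L ≤ 3))
  exact h2.trans (hm l hl)

lemma exists_ne_zero_dual : ∃ l : (Fin 4 → k) →ₗ[k] k, l ≠ 0 := by
  refine ⟨LinearMap.proj 0, fun h => ?_⟩
  have := LinearMap.congr_fun h (fun _ => 1)
  simp at this

lemma not_nonPlanar {p : ι → Fin n → k} {Z : ι → k × (Fin n → k)} (h : ¬ NonPlanar p Z) :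
    ∃ l : (Fin n → k) →ₗ[k] k, l ≠ 0 ∧ dl (LinearMap.ker l) p Z = D Z := by
  unfold NonPlanar at h
  push Not at h
  obtain ⟨l, hl, h⟩ := h
  exact ⟨l, hl, le_antisymm (dl_le_D _ _ _) h⟩

lemma lemmaG {p : ι → Fin 4 → k} (e : ℕ) : ∀ {Z : ι → k × (Fin 4 → k)}, Valid p Z →
    Rel e p Z → NonPlanar p Z → D Z ≤ 3 * e + 1 → ∀ l : (Fin 4 → k) →ₗ[k] k, l ≠ 0 →
    (∀ l' : (Fin 4 → k) →ₗ[k] k, l' ≠ 0 → dl (LinearMap.ker l') p Z ≤ dl (LinearMap.ker l) p Z) →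
    e + 2 ≤ dl (LinearMap.ker l) p Z ∧ dl (LinearMap.ker l) p Z + e + 1 ≤ D Z ∧
      (3 ≤ e → e + 3 ≤ dl (LinearMap.ker l) p Z) := by
  induction e with
  | zero =>
    intro Z hv hr hnp hD l hl hmax
    have h0 := hnp l hl
    have := lemma0 (by omega) _ hv hr (by omega)
    omega
  | succ e ih =>
    intro Z hv hr hnp hD l hl hmax
    have h0 := hnp l hl
    have hres := D_res_lin l p Z
    set m := dl (LinearMap.ker l) p Z with hm
    have hv' := hv.res (lin l)
    have hr' := hr.res (lin_hom l)
    have hm3 : 3 ≤ m := by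
      have hD4 : 3 ≤ D Z := by
        by_contra hlt
        obtain ⟨U, hU, hU'⟩ := pick_sum p Z (D Z) le_rfl
        have := hnp.line (by omega : Module.finrank k U ≤ 3)
        omega
      obtain ⟨U, hU, hU'⟩ := pick_sum p Z 3 hD4
      obtain ⟨l', hl', -, h2, -⟩ := generic_dl
        (ne_top_of_finrank (by omega : Module.finrank k U < 4)) p Z ∅ (by simp)
      have := hmax l' hl'
      omega
    have hl0 := lemma0 (by omega) _ hv' hr' (by omega)
    by_cases hnp' : NonPlanar p (res (lin l) p Z)
    · obtain ⟨l', hl', hmax'⟩ := exists_max p (res (lin l) p Z) (fun l => l ≠ 0) ⟨l, hl⟩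
      obtain ⟨g1, g2, -⟩ := ih hv' hr' hnp' (by omega) l' hl' hmax'
      have h1 := dl_res (LinearMap.ker l') (lin l) p Z
      have h2 := hmax l' hl'
      omega
    · obtain ⟨l', hl', h1⟩ := not_nonPlanar hnp'
      have h2 := hmax l' hl'
      have h3 := dl_res (LinearMap.ker l') (lin l) p Z
      obtain ⟨L, hL, hLd⟩ := lemma1 (by omega) _ hv' hr' (by omega)
      have h4 := dl_res L (lin l) p Z
      have h5 := hnp.extra hL hmax
      refine ⟨by omega, by omega, fun he => ?_⟩
      by_contra hlt
      obtain ⟨N, hN, hLN, hNd, -⟩ := generic_dl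
        (ne_top_of_finrank (by omega : Module.finrank k L < 4)) p Z ∅ (by simp)
      have hresN := D_res_lin N p Z
      have hvN := hv.res (lin N)
      have hrN := hr.res (lin_hom N)
      obtain ⟨L2, hL2, hL2d⟩ := lemma1 (by omega) _ hvN hrN (by omega)
      have h6 := dl_res L2 (lin N) p Z
      have h7 := hnp.extra hL2 hmax
      omega

lemma lemmaLG {p : ι → Fin 4 → k} {e : ℕ} {Z : ι → k × (Fin 4 → k)} (hv : Valid p Z)
    (hr : Rel e p Z) (hD : 0 < D Z) (he : 2 ≤ e)
    (hpl : ∀ l : (Fin 4 → k) →ₗ[k] k, l ≠ 0 → dl (LinearMap.ker l) p Z ≤ 3) :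
    3 * e + 2 ≤ D Z := by
  have h0 := lemma0 (by omega) _ hv hr hD
  have hnp : NonPlanar p Z := by
    intro l hl; have := hpl l hl; omega
  by_contra hlt
  obtain ⟨l', hl', hmax'⟩ := exists_max p Z (fun l => l ≠ 0) exists_ne_zero_dual
  have := lemmaG _ hv hr hnp (by omega) l' hl' hmax'
  have := hpl l' hl'
  omega

end

end Terr

open MvPolynomial

namespace Terr

open scoped Classical

noncomputable section

set_option linter.unusedSectionVars false

variable {k : Type*} [Field k] [Infinite k] {n : ℕ} {ι : Type*} [Fintype ι]

lemma finrank_V (m d : ℕ) :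
    Module.finrank k (homogeneousSubmodule (Fin (m+1)) k d) = (m + d).choose m := by
  have h1 : ({x : Fin (m+1) →₀ ℕ | Finsupp.degree x = d} : Set _) =
      ((Finset.univ : Finset (Fin (m+1))).finsuppAntidiag d : Set _) := by
    ext x; simp [Finset.mem_finsuppAntidiag, Finsupp.degree_eq_sum]
  have e : homogeneousSubmodule (Fin (m+1)) k d ≃ₗ[k]
      (((Finset.univ : Finset (Fin (m+1))).finsuppAntidiag d : Set (Fin (m+1) →₀ ℕ)) →₀ k) := by
    rw [homogeneousSubmodule_eq_finsupp_supported, h1]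
    exact AddMonoidAlgebra.supportedEquivFinsupp _
  rw [e.finrank_eq, Module.finrank_finsupp_self]
  simp only [Finset.coe_sort_coe, Fintype.card_coe]
  rw [Finset.card_finsuppAntidiag_nat_eq_choose]
  simp only [Finset.card_univ, Fintype.card_fin]
  rw [show m + 1 + d - 1 = m + d by omega, Nat.choose_symm_add]

instance (m d : ℕ) : FiniteDimensional k (homogeneousSubmodule (Fin m) k d) :=
  Module.Finite.iff_fg.2 (homogeneousSubmodule_fg _ _ _)

lemma lin_ne_zero {l : (Fin n → k) →ₗ[k] k} (hl : l ≠ 0) : lin l ≠ 0 := by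
  intro h
  apply hl
  ext v
  have := eval_lin l (Pi.single v 1)
  rw [h] at this
  simpa using this.symm

lemma lin_prime {l : (Fin n → k) →ₗ[k] k} (hl : l ≠ 0) : Prime (lin l) := by
  rw [← irreducible_iff_prime]
  apply irreducible_of_totalDegree_eq_one ((lin_hom l).totalDegree (lin_ne_zero hl))
  intro x hx
  rw [isUnit_iff_ne_zero]
  rintro rfl
  apply lin_ne_zero hl
  ext i
  simpa using hx i

lemma lin_dvd_lin {l h : (Fin n → k) →ₗ[k] k} (hd : lin l ∣ lin h) : h ∈ Submodule.span k {l} := by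
  obtain ⟨G, hG⟩ := hd
  have hk : ∀ v, l v = 0 → h v = 0 := by
    intro v hv
    have := congrArg (eval v) hG
    rw [map_mul, eval_lin, eval_lin, hv, zero_mul] at this
    exact this
  by_cases hl : l = 0
  · have : h = 0 := by ext v; simpa using hk (Pi.single v 1) (by simp [hl])
    simp [this]
  obtain ⟨u, hu⟩ : ∃ u, l u ≠ 0 := by
    by_contra! hc
    exact hl (LinearMap.ext fun v => by simp [hc v])
  refine Submodule.mem_span_singleton.2 ⟨h u / l u, LinearMap.ext fun v => ?_⟩
  have h1 := hk (v - (l v / l u) • u) (by simp; field_simp; ring)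
  simp only [map_sub, map_smul, smul_eq_mul, sub_eq_zero] at h1
  simp only [LinearMap.smul_apply, smul_eq_mul, h1]
  field_simp

/-- homogeneous quotient -/
lemma hom_quot {F G : MvPolynomial (Fin n) k} {m e : ℕ} (hF : F.IsHomogeneous m) (hF0 : F ≠ 0)
    (hFG : (F * G).IsHomogeneous (m + e)) : G.IsHomogeneous e := by
  have h1 : F * homogeneousComponent e G = F * G := by
    have h2 : homogeneousComponent (m + e) (F * G) = F * G := homogeneousComponent_eq_self hFG
    rw [← h2]
    conv_rhs => rw [← sum_homogeneousComponent G]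
    rw [Finset.mul_sum, map_sum]
    have h3 : ∀ i, homogeneousComponent (m + e) (F * homogeneousComponent i G) =
        if i = e then F * homogeneousComponent i G else 0 := by
      intro i
      rw [homogeneousComponent_of_mem (m := m + e) (n := m + i)
        (hF.mul (homogeneousComponent_isHomogeneous i G))]
      simp [eq_comm]
    simp only [h3]
    rw [Finset.sum_ite_eq']
    split_ifs with h4
    · rfl
    · rw [homogeneousComponent_eq_zero _ _ (by simp at h4; omega), mul_zero]
  have h5 := mul_left_cancel₀ hF0 h1
  rw [← h5]
  exact homogeneousComponent_isHomogeneous _ _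

lemma lin_dvd_hom {l : (Fin n → k) →ₗ[k] k} {F : MvPolynomial (Fin n) k} {e : ℕ} (hl : l ≠ 0)
    (hF : F.IsHomogeneous (1 + e)) (hd : lin l ∣ F) :
    ∃ G : MvPolynomial (Fin n) k, G.IsHomogeneous e ∧ F = lin l * G := by
  obtain ⟨G, rfl⟩ := hd
  exact ⟨G, hom_quot (lin_hom l) (lin_ne_zero hl) hF, rfl⟩

/-- multiples of `G` in degree `e`. -/
def mulV (G : MvPolynomial (Fin n) k) (e : ℕ) : Submodule k (MvPolynomial (Fin n) k) :=
  (homogeneousSubmodule (Fin n) k e).map (LinearMap.mulLeft k G)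

lemma mem_mulV {G F : MvPolynomial (Fin n) k} {e : ℕ} :
    F ∈ mulV G e ↔ ∃ H : MvPolynomial (Fin n) k, H.IsHomogeneous e ∧ G * H = F := by
  simp [mulV, Submodule.mem_map]

lemma finrank_mulV {G : MvPolynomial (Fin n) k} (hG : G ≠ 0) (e : ℕ) :
    Module.finrank k (mulV G e) = Module.finrank k (homogeneousSubmodule (Fin n) k e) :=
  ((Submodule.equivMapOfInjective (LinearMap.mulLeft k G)
    (fun a b h => mul_left_cancel₀ hG h) _).finrank_eq).symm

instance (G : MvPolynomial (Fin n) k) (e : ℕ) : FiniteDimensional k (mulV G e) := by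
  unfold mulV; infer_instance

lemma mulV_le {G : MvPolynomial (Fin n) k} {m e d : ℕ} (hG : G.IsHomogeneous m) (h : m + e = d) :
    mulV G e ≤ homogeneousSubmodule (Fin n) k d := by
  intro F hF
  obtain ⟨H, hH, rfl⟩ := mem_mulV.1 hF
  subst h
  exact hG.mul hH

lemma res_mul (G H : MvPolynomial (Fin n) k) (p : ι → Fin n → k) (Z : ι → k × (Fin n → k)) :
    res (G * H) p Z = res H p (res G p Z) := by
  funext i
  simp only [res, cres, map_mul, dv_mul, dv_smul_right, smul_smul]
  ext
  · simp only; ring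
  · simp only [Pi.smul_apply, smul_eq_mul]; ring

lemma dl_eq_res {L : Submodule k (Fin n → k)} {p : ι → Fin n → k} {Z : ι → k × (Fin n → k)}
    (h : dl L p Z = D Z) (G : MvPolynomial (Fin n) k) : dl L p (res G p Z) = D (res G p Z) := by
  rw [dl_eq_iff] at *
  intro i
  have hi := h i
  have h2 := mem_of_cdl_two hi
  simp only [res]
  by_cases h0 : cdeg (Z i) = 0
  · have h3 := cdeg_res_le G (p i) (Z i)
    have h4 := cdl_le_cdeg L (p i) (cres G (p i) (Z i))
    omega
  · have hp : p i ∈ L := mem_of_cdl (by omega : 0 < cdl L (p i) (Z i))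
    have hw : (cres G (p i) (Z i)).2 ∈ L := L.smul_mem _ h2
    unfold cdl cdeg
    simp only [hp, hw, if_true]

lemma finrank_ker_ge (l : (Fin n → k) →ₗ[k] k) : n ≤ Module.finrank k (LinearMap.ker l) + 1 := by
  have h := LinearMap.finrank_range_add_finrank_ker l
  have h2 := Submodule.finrank_le (LinearMap.range l)
  rw [Module.finrank_self] at h2
  rw [Module.finrank_fin_fun] at h
  omega

/-- a plane through the line `L`, other than a given one -/
lemma line_plane (p : ι → Fin 4 → k) (Z : ι → k × (Fin 4 → k)) {L : Submodule k (Fin 4 → k)}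
    (hL : Module.finrank k L ≤ 2) (μ : (Fin 4 → k) →ₗ[k] k) :
    ∃ h : (Fin 4 → k) →ₗ[k] k, h ∉ Submodule.span k {μ} ∧ L ≤ LinearMap.ker h ∧
      dl (LinearMap.ker h) p Z = dl L p Z := by
  obtain ⟨v, hv, hvL⟩ : ∃ v ∈ LinearMap.ker μ, v ∉ L := by
    by_contra! hc
    have h1 := Submodule.finrank_mono (show LinearMap.ker μ ≤ L from hc)
    have h2 := finrank_ker_ge μ
    omega
  obtain ⟨h, h1, h2, h3, h4⟩ := generic_dl (ne_top_of_finrank (by omega : Module.finrank k L < 4))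
    p Z {v} (by simpa using hvL)
  refine ⟨h, fun hm => ?_, h2, h3⟩
  obtain ⟨c, rfl⟩ := Submodule.mem_span_singleton.1 hm
  apply h4 v (by simp)
  have : μ v = 0 := hv
  simp [this]

lemma D_res_zero_of_dl {l : (Fin n → k) →ₗ[k] k} {p : ι → Fin n → k} {Z : ι → k × (Fin n → k)}
    (h : dl (LinearMap.ker l) p Z = D Z) : D (res (lin l) p Z) = 0 := by
  have := D_res_lin l p Z
  omega

lemma D_res_zero {G : MvPolynomial (Fin n) k} {p : ι → Fin n → k} {Z : ι → k × (Fin n → k)}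
    (h : D Z = 0) : D (res G p Z) = 0 := by
  have := D_res_le G p Z
  omega

/-- quadrics not divisible by `μ` -/
lemma exists_W {μ : (Fin 4 → k) →ₗ[k] k} (hμ : μ ≠ 0) :
    ∃ W : Submodule k (MvPolynomial (Fin 4) k), FiniteDimensional k W ∧
      5 < Module.finrank k W ∧ ∀ G ∈ W, G ≠ 0 → G.IsHomogeneous 2 ∧ ¬ lin μ ∣ G := by
  obtain ⟨W', hW'⟩ := Submodule.exists_isCompl (mulV (lin μ) 1)
  have hle : mulV (lin μ) 1 ≤ homogeneousSubmodule (Fin 4) k 2 := mulV_le (lin_hom μ) rfl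
  have hfd : FiniteDimensional k ↥(W' ⊓ homogeneousSubmodule (Fin 4) k 2) :=
    Submodule.finiteDimensional_inf_right _ _
  refine ⟨W' ⊓ homogeneousSubmodule (Fin 4) k 2, hfd, ?_, fun G hG hG0 => ⟨hG.2, fun hd => ?_⟩⟩
  · have h1 : mulV (lin μ) 1 ⊔ (W' ⊓ homogeneousSubmodule (Fin 4) k 2) =
        homogeneousSubmodule (Fin 4) k 2 := by
      rw [← sup_inf_assoc_of_le _ hle, hW'.sup_eq_top, top_inf_eq]
    have h2 := Submodule.finrank_add_le_finrank_add_finrank (mulV (lin μ) 1)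
      (W' ⊓ homogeneousSubmodule (Fin 4) k 2)
    rw [h1, finrank_mulV (lin_ne_zero hμ), finrank_V 3 2, finrank_V 3 1] at h2
    have e1 : (3 + 2).choose 3 = 10 := by decide
    have e2 : (3 + 1).choose 3 = 4 := by decide
    omega
  · obtain ⟨H, hH, rfl⟩ := lin_dvd_hom (e := 1) hμ hG.2 hd
    have : lin μ * H ∈ mulV (lin μ) 1 ⊓ W' := ⟨mem_mulV.2 ⟨H, hH, rfl⟩, hG.1⟩
    rw [hW'.inf_eq_bot] at this
    exact hG0 ((Submodule.mem_bot k).1 this)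

lemma lemmaP {p : ι → Fin 4 → k} {μ : (Fin 4 → k) →ₗ[k] k} (hμ : μ ≠ 0) (c : ℕ) :
    ∀ (e : ℕ) {Z : ι → k × (Fin 4 → k)}, Valid p Z → Rel e p Z →
    dl (LinearMap.ker μ) p Z = D Z → D Z ≤ 2 * e + 2 + c → 2 * c + 2 ≤ e →
    ∃ q : MvPolynomial (Fin 4) k, q.IsHomogeneous 2 ∧ ¬ lin μ ∣ q ∧ D (res q p Z) = 0 := by
  have hpr := lin_prime hμ
  induction c with
  | zero =>
    intro e Z hv hr hpl hD he
    obtain ⟨e, rfl⟩ : ∃ e', e = e' + 2 := ⟨e - 2, by omega⟩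
    have prodq : ∀ l h : (Fin 4 → k) →ₗ[k] k, l ∉ Submodule.span k {μ} → h ∉ Submodule.span k {μ} →
        (lin l * lin h).IsHomogeneous 2 ∧ ¬ lin μ ∣ lin l * lin h := fun l h hl hh =>
      ⟨(lin_hom l).mul (lin_hom h), fun hd => (hpr.dvd_or_dvd hd).elim
        (fun h' => hl (lin_dvd_lin h')) (fun h' => hh (lin_dvd_lin h'))⟩
    by_cases hD1 : D Z ≤ 2 * (e + 2) + 1
    · obtain ⟨L, hL, hLd⟩ := lemma1 (by omega) _ hv hr hD1
      obtain ⟨h, hh, hLh, hdl⟩ := line_plane p Z hL μ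
      refine ⟨lin h * lin h, (prodq h h hh hh).1, (prodq h h hh hh).2, ?_⟩
      rw [res_mul]
      exact D_res_zero (D_res_zero_of_dl (by omega))
    · obtain ⟨h0, hh0, -⟩ := line_plane p Z (L := ⊥) (by simp) μ
      obtain ⟨l, hl, hmax⟩ := exists_max p Z (fun l => l ∉ Submodule.span k {μ}) ⟨h0, hh0⟩
      have hres := D_res_lin l p Z
      have hv' := hv.res (lin l)
      have hr' : Rel (e + 1) p (res (lin l) p Z) := Rel.res (e := e + 1) (m := 1) hr (lin_hom l)
      by_cases hb : 3 ≤ dl (LinearMap.ker l) p Z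
      · obtain ⟨L, hL, hLd⟩ := lemma1 (by omega) _ hv' hr' (by omega)
        obtain ⟨h, hh, hLh, hdl⟩ := line_plane p (res (lin l) p Z) hL μ
        refine ⟨lin l * lin h, (prodq l h hl hh).1, (prodq l h hl hh).2, ?_⟩
        rw [res_mul]
        exact D_res_zero_of_dl (by omega)
      · obtain ⟨W, hWf, hW5, hW⟩ := exists_W hμ
        obtain ⟨f, hf, hfs⟩ := exists_sub_sum (fun i => cdeg (Z i)) 5 (by
          have : D Z = ∑ i, cdeg (Z i) := rfl
          omega)
        obtain ⟨q, hqW, hq0, hq⟩ := pick_form p Z f hf W (by omega)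
        refine ⟨q, (hW q hqW hq0).1, (hW q hqW hq0).2, ?_⟩
        have hDq : D (res q p Z) + 5 ≤ D Z := by
          rw [← hfs]; unfold D
          rw [← Finset.sum_add_distrib]
          exact Finset.sum_le_sum fun i _ => hq i
        have hvq := hv.res q
        have hrq : Rel e p (res q p Z) := Rel.res (e := e) (m := 2) hr (hW q hqW hq0).1
        by_contra hne
        have h0 := lemma0 (by omega) _ hvq hrq (by omega)
        obtain ⟨L, hL, hLd⟩ := lemma1 (by omega) _ hvq hrq (by omega)
        obtain ⟨h, hh, hLh, hdl⟩ := line_plane p Z hL μ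
        have h1 := hmax h hh
        have h2 := dl_res L q p Z
        omega
  | succ c ih =>
    intro e Z hv hr hpl hD he
    obtain ⟨e, rfl⟩ : ∃ e', e = e' + 2 := ⟨e - 2, by omega⟩
    have prodq : ∀ l h : (Fin 4 → k) →ₗ[k] k, l ∉ Submodule.span k {μ} → h ∉ Submodule.span k {μ} →
        (lin l * lin h).IsHomogeneous 2 ∧ ¬ lin μ ∣ lin l * lin h := fun l h hl hh =>
      ⟨(lin_hom l).mul (lin_hom h), fun hd => (hpr.dvd_or_dvd hd).elim
        (fun h' => hl (lin_dvd_lin h')) (fun h' => hh (lin_dvd_lin h'))⟩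
    by_cases hD1 : D Z ≤ 2 * (e + 2) + 1
    · obtain ⟨L, hL, hLd⟩ := lemma1 (by omega) _ hv hr hD1
      obtain ⟨h, hh, hLh, hdl⟩ := line_plane p Z hL μ
      refine ⟨lin h * lin h, (prodq h h hh hh).1, (prodq h h hh hh).2, ?_⟩
      rw [res_mul]
      exact D_res_zero (D_res_zero_of_dl (by omega))
    · obtain ⟨h0, hh0, -⟩ := line_plane p Z (L := ⊥) (by simp) μ
      obtain ⟨l, hl, hmax⟩ := exists_max p Z (fun l => l ∉ Submodule.span k {μ}) ⟨h0, hh0⟩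
      have hres := D_res_lin l p Z
      have hv' := hv.res (lin l)
      have hr' : Rel (e + 1) p (res (lin l) p Z) := Rel.res (e := e + 1) (m := 1) hr (lin_hom l)
      by_cases hb : 3 ≤ dl (LinearMap.ker l) p Z
      · by_cases hD2 : D (res (lin l) p Z) ≤ 2 * (e + 1) + 1
        · obtain ⟨L, hL, hLd⟩ := lemma1 (by omega) _ hv' hr' hD2
          obtain ⟨h, hh, hLh, hdl⟩ := line_plane p (res (lin l) p Z) hL μ
          refine ⟨lin l * lin h, (prodq l h hl hh).1, (prodq l h hl hh).2, ?_⟩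
          rw [res_mul]
          exact D_res_zero_of_dl (by omega)
        · obtain ⟨q, hq2, hqμ, hq⟩ := ih (e + 1) hv' hr' (dl_eq_res hpl _) (by omega) (by omega)
          refine ⟨q, hq2, hqμ, ?_⟩
          have h2 := D_two_res q (lin l) p Z hq
          by_contra hne
          have h0 := lemma0 (by omega) e (hv.res q) (Rel.res (e := e) (m := 2) hr hq2) (by omega)
          omega
      · obtain ⟨W, hWf, hW5, hW⟩ := exists_W hμ
        obtain ⟨f, hf, hfs⟩ := exists_sub_sum (fun i => cdeg (Z i)) 5 (by
          have : D Z = ∑ i, cdeg (Z i) := rfl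
          omega)
        obtain ⟨q, hqW, hq0, hq⟩ := pick_form p Z f hf W (by omega)
        have hDq : D (res q p Z) + 5 ≤ D Z := by
          rw [← hfs]; unfold D
          rw [← Finset.sum_add_distrib]
          exact Finset.sum_le_sum fun i _ => hq i
        have hvq := hv.res q
        have hrq : Rel e p (res q p Z) := Rel.res (e := e) (m := 2) hr (hW q hqW hq0).1
        have noline : ∀ G : MvPolynomial (Fin 4) k, G.IsHomogeneous 2 →
            D (res G p Z) ≤ 2 * e + 1 → D (res G p Z) = 0 := by
          intro G hG hGD
          by_contra hne
          have hrG : Rel e p (res G p Z) := Rel.res (e := e) (m := 2) hr hG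
          have h0 := lemma0 (by omega) _ (hv.res G) hrG (by omega)
          obtain ⟨L, hL, hLd⟩ := lemma1 (by omega) _ (hv.res G) hrG (by omega)
          obtain ⟨h, hh, hLh, hdl⟩ := line_plane p Z hL μ
          have h1 := hmax h hh
          have h2 := dl_res L G p Z
          omega
        by_cases hD2 : D (res q p Z) ≤ 2 * e + 1
        · exact ⟨q, (hW q hqW hq0).1, (hW q hqW hq0).2, noline q (hW q hqW hq0).1 hD2⟩
        · obtain ⟨q', hq2', hqμ', hq'⟩ := ih e hvq hrq (dl_eq_res hpl _) (by omega) (by omega)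
          have h2 := D_two_res q' q p Z hq'
          exact ⟨q', hq2', hqμ', noline q' hq2' (by omega)⟩

/-- dependency from counting -/
lemma exists_dep {V : Type*} [AddCommGroup V] [Module k V] [FiniteDimensional k V]
    {κ : Type*} [Fintype κ] (φ : V →ₗ[k] (κ → k)) (K : Submodule k V) (hK : K ≤ LinearMap.ker φ)
    (h : Module.finrank k V < Module.finrank k K + Fintype.card κ) :
    ∃ c : κ → k, c ≠ 0 ∧ ∀ v, ∑ i, c i * φ v i = 0 := by
  have h1 := LinearMap.finrank_range_add_finrank_ker φ
  have h2 := Submodule.finrank_mono hK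
  have h3 : LinearMap.range φ < ⊤ := by
    rw [lt_top_iff_ne_top]
    intro ht
    rw [ht, finrank_top, Module.finrank_fintype_fun_eq_card] at h1
    omega
  obtain ⟨f, hf, hf'⟩ := Submodule.exists_le_ker_of_lt_top _ h3
  refine ⟨fun i => f (Pi.single i 1), fun h0 => hf ?_, fun v => ?_⟩
  · ext i; simpa using congrFun h0 i
  · have h4 : f (φ v) = 0 := hf' ⟨v, rfl⟩
    rw [← h4]
    conv_rhs => rw [LinearMap.pi_apply_eq_sum_univ f (φ v)]
    refine Finset.sum_congr rfl fun j _ => ?_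
    rw [smul_eq_mul, mul_comm]
    congr 1
    show f (Pi.single j 1) = f _
    congr 1
    funext i
    simp [Pi.single_apply, eq_comm]

end

end Terr

open MvPolynomial

namespace Terr

open scoped Classical

noncomputable section

set_option linter.unusedSectionVars false

variable {k : Type*} [Field k] [Infinite k] {n : ℕ} {ι : Type*} [Fintype ι]

lemma choose3 (e : ℕ) : 6 * (3 + e).choose 3 = (e + 1) * (e + 2) * (e + 3) := by
  induction e with
  | zero => decide
  | succ e ih =>
    have h2 : ∀ a : ℕ, 2 * (a + 2).choose 2 = (a + 1) * (a + 2) := by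
      intro a
      induction a with
      | zero => decide
      | succ a iha =>
        rw [show a + 1 + 2 = (a + 2) + 1 by ring, Nat.choose_succ_succ' (a + 2) 1,
          Nat.choose_one_right]
        linarith
    rw [show 3 + (e + 1) = (3 + e) + 1 by ring, Nat.choose_succ_succ' (3 + e) 2]
    have := h2 (e + 1)
    rw [show e + 1 + 2 = 3 + e by ring] at this
    linarith

lemma exists_tangent (μ ν : (Fin 4 → k) →ₗ[k] k) (p : Fin 4 → k) :
    ∃ w, μ w = 0 ∧ ν w = 0 ∧ w ∉ Submodule.span k {p} := by
  by_contra! hc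
  have hle : LinearMap.ker (μ.prod ν) ≤ Submodule.span k {p} := by
    intro w hw
    have hw' : (μ w, ν w) = 0 := hw
    rw [Prod.ext_iff] at hw'
    exact hc w hw'.1 hw'.2
  have h1 := Submodule.finrank_mono hle
  have h2 := LinearMap.finrank_range_add_finrank_ker (μ.prod ν)
  have h3 := Submodule.finrank_le (LinearMap.range (μ.prod ν))
  have h4 : Module.finrank k (Submodule.span k {p}) ≤ 1 := by
    simpa using finrank_span_le_card (R := k) ({p} : Set (Fin 4 → k))
  rw [Module.finrank_prod, Module.finrank_self] at h3
  rw [Module.finrank_fin_fun] at h2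
  omega

/-- `dv` as a linear form in the direction. -/
def dvL (F : MvPolynomial (Fin n) k) (p : Fin n → k) : (Fin n → k) →ₗ[k] k where
  toFun := dv F p
  map_add' := dv_add_right F p
  map_smul' := fun c w => by simp [dv_smul_right]

/-- evaluation/derivative functionals on a space of forms -/
def evdv {κ : Type*} (V : Submodule k (MvPolynomial (Fin n) k)) (p w : κ → Fin n → k) :
    V →ₗ[k] (κ ⊕ κ → k) where
  toFun F := Sum.elim (fun i => eval (p i) F.1) (fun i => dv F.1 (p i) (w i))
  map_add' F G := by
    funext i; cases i <;> simp [dv_add]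
  map_smul' c F := by
    funext i; cases i <;> simp [dv_smul, smul_eval]

lemma finrank_K {μ : (Fin 4 → k) →ₗ[k] k} (hμ : μ ≠ 0) {q : MvPolynomial (Fin 4) k} {m e : ℕ}
    (hq : q.IsHomogeneous m) (hd : ¬ lin μ ∣ q) :
    (3 + (m + e)).choose 3 + (3 + (e + 1)).choose 3 ≤
      Module.finrank k ↥(mulV (lin μ) (m + e) ⊔ mulV q (e + 1)) + (3 + e).choose 3 := by
  have hq0 : q ≠ 0 := by rintro rfl; exact hd (dvd_zero _)
  have h1 := Submodule.finrank_sup_add_finrank_inf_eq (mulV (lin μ) (m + e)) (mulV q (e + 1))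
  have h2 : mulV (lin μ) (m + e) ⊓ mulV q (e + 1) ≤ mulV (lin μ * q) e := by
    rintro F ⟨hF1, hF2⟩
    obtain ⟨a, ha, rfl⟩ := mem_mulV.1 hF1
    obtain ⟨b, hb, hab⟩ := mem_mulV.1 hF2
    have h3 : lin μ ∣ q * b := ⟨a, hab⟩
    have h4 := ((lin_prime hμ).dvd_or_dvd h3).resolve_left hd
    obtain ⟨c, hc, rfl⟩ := lin_dvd_hom (e := e) hμ (by rwa [add_comm]) h4
    refine mem_mulV.2 ⟨c, hc, ?_⟩
    rw [← hab]; ring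
  have h3 := Submodule.finrank_mono h2
  rw [finrank_mulV (mul_ne_zero (lin_ne_zero hμ) hq0), finrank_V 3 e] at h3
  rw [finrank_mulV (lin_ne_zero hμ), finrank_mulV hq0, finrank_V 3, finrank_V 3] at h1
  omega

lemma lemmaB {κ : Type*} [Fintype κ] {p : κ → Fin 4 → k} {μ : (Fin 4 → k) →ₗ[k] k} (hμ : μ ≠ 0)
    {q : MvPolynomial (Fin 4) k} {m d : ℕ} (hm : m = 1 ∨ m = 2) (hd3 : 3 ≤ d) (hdk : (d : k) ≠ 0)
    (hq : q.IsHomogeneous m) (hd : ¬ lin μ ∣ q) (hp0 : ∀ i, p i ≠ 0) (hp : ∀ i, μ (p i) = 0)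
    (hpq : ∀ i, eval (p i) q = 0) (hcard : m * d + 2 ≤ 2 * Fintype.card κ) :
    ∃ w : κ → Fin 4 → k, w ≠ 0 ∧ ∀ F : MvPolynomial (Fin 4) k, F.IsHomogeneous d →
      ∑ i, dv F (p i) (w i) = 0 := by
  choose w hw1 hw2 hw3 using fun i => exists_tangent μ (dvL q (p i)) (p i)
  have hw2 : ∀ i, dv q (p i) (w i) = 0 := hw2
  obtain ⟨e, rfl⟩ : ∃ e, d = m + e + 1 := ⟨d - m - 1, by omega⟩
  have hKle : mulV (lin μ) (m + e) ⊔ mulV q (e + 1) ≤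
      homogeneousSubmodule (Fin 4) k (m + e + 1) :=
    sup_le (mulV_le (lin_hom μ) (by ring)) (mulV_le hq (by ring))
  obtain ⟨c, hc0, hc⟩ := exists_dep (evdv (homogeneousSubmodule (Fin 4) k (m + e + 1)) p w)
    ((mulV (lin μ) (m + e) ⊔ mulV q (e + 1)).comap
      (homogeneousSubmodule (Fin 4) k (m + e + 1)).subtype) (by
      rintro ⟨F, hF⟩ hFK
      have hFK : F ∈ mulV (lin μ) (m + e) ⊔ mulV q (e + 1) := hFK
      obtain ⟨F1, hF1, F2, hF2, rfl⟩ := Submodule.mem_sup.1 hFK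
      obtain ⟨a, ha, rfl⟩ := mem_mulV.1 hF1
      obtain ⟨b, hb, rfl⟩ := mem_mulV.1 hF2
      show evdv _ p w _ = 0
      funext i
      cases i <;>
      simp [evdv, eval_lin, dv_add, dv_mul, dv_lin, hp, hpq, hw1, hw2]) (by
      rw [(Submodule.comapSubtypeEquivOfLe hKle).finrank_eq, finrank_V 3, Fintype.card_sum]
      have h1 := finrank_K (e := e) hμ hq hd
      have c1 := choose3 (m + e)
      have c2 := choose3 (e + 1)
      have c3 := choose3 e
      have c4 := choose3 (m + e + 1)
      rcases hm with rfl | rfl <;> nlinarith)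
  refine ⟨fun i => (c (Sum.inl i) * ((m + e + 1 : ℕ) : k)⁻¹) • p i + c (Sum.inr i) • w i, ?_, ?_⟩
  · intro h0
    apply hc0
    have hr : ∀ i, c (Sum.inr i) = 0 := by
      intro i
      by_contra hne
      apply hw3 i
      have h1 := congrFun h0 i
      rw [← Submodule.smul_mem_iff _ hne]
      have h2 : c (Sum.inr i) • w i = -(c (Sum.inl i) * ((m + e + 1 : ℕ) : k)⁻¹) • p i := by
        have h1' : (c (Sum.inl i) * ((m + e + 1 : ℕ) : k)⁻¹) • p i + c (Sum.inr i) • w i = 0 := h1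
        rw [neg_smul]; exact eq_neg_of_add_eq_zero_right h1'
      rw [h2]
      exact Submodule.smul_mem _ _ (Submodule.mem_span_singleton_self _)
    funext i
    cases i with
    | inr i => exact hr i
    | inl i =>
      have h1 : (c (Sum.inl i) * ((m + e + 1 : ℕ) : k)⁻¹) • p i + c (Sum.inr i) • w i = 0 :=
        congrFun h0 i
      rw [hr i, zero_smul, add_zero, smul_eq_zero] at h1
      rcases h1 with h1 | h1
      · exact (mul_eq_zero.1 h1).resolve_right (inv_ne_zero hdk)
      · exact absurd h1 (hp0 i)
  · intro F hF
    have h1 := hc ⟨F, hF⟩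
    rw [Fintype.sum_sum_type, ← Finset.sum_add_distrib] at h1
    rw [← h1]
    refine Finset.sum_congr rfl fun i _ => ?_
    simp only [dv_add_right, dv_smul_right, dv_self hF, evdv, LinearMap.coe_mk, AddHom.coe_mk,
      Sum.elim_inl, Sum.elim_inr]
    field_simp

end

end Terr

open MvPolynomial

namespace Terr

open scoped Classical

noncomputable section

set_option linter.unusedSectionVars false

variable {k : Type*} [Field k] {ι : Type*} [Fintype ι]

lemma lemmaCc [Infinite k] {p : ι → Fin 4 → k} (J : Finset ι) (hJ : J.card = 8) (e : ℕ) :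
    ∀ {Z : ι → k × (Fin 4 → k)}, Valid p Z →
    Rel (e + 2) p Z → D Z = 3 * (e + 2) + 2 →
    (∀ l : (Fin 4 → k) →ₗ[k] k, l ≠ 0 → dl (LinearMap.ker l) p Z ≤ 3) →
    (∀ i ∈ J, 1 ≤ cdeg (Z i)) →
    ∃ c : ι → k, (∀ i ∈ J, c i ≠ 0) ∧ ∀ Q : MvPolynomial (Fin 4) k, Q.IsHomogeneous 2 →
      ∑ i ∈ J, c i * eval (p i) Q = 0 := by
  induction e with
  | zero =>
    intro Z hv hr hD hpl hJ1
    have hs : ∑ i, (if i ∈ J then 1 else 0) = ∑ i, cdeg (Z i) := by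
      have h1 : ∑ i, cdeg (Z i) = 8 := hD
      rw [h1]; simp [hJ]
    have hle : ∀ i ∈ Finset.univ, (if i ∈ J then 1 else 0) ≤ cdeg (Z i) := by
      intro i _; split_ifs with h
      · exact hJ1 i h
      · omega
    have heq := (Finset.sum_eq_sum_iff_of_le hle).1 hs
    refine ⟨fun i => (Z i).1, fun i hi => ?_, fun Q hQ => ?_⟩
    · have h1 := heq i (Finset.mem_univ _)
      rw [if_pos hi] at h1
      unfold cdeg at h1
      intro h0
      simp only [h0] at h1
      split_ifs at h1 <;> simp_all
    · have h1 := hr Q hQ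
      have h2 : ∀ i, (Z i).2 = 0 := by
        intro i
        have h3 := heq i (Finset.mem_univ _)
        by_contra h0
        have : cdeg (Z i) = 2 := by simp [cdeg, h0]
        split_ifs at h3 <;> omega
      rw [← h1]
      simp only [h2, dv_zero_right, add_zero]
      rw [← Finset.sum_subset (Finset.subset_univ J)]
      intro i _ hi
      have h3 := heq i (Finset.mem_univ _)
      rw [if_neg hi] at h3
      rw [cdeg_eq_zero.1 h3.symm]; simp
  | succ e ih =>
    intro Z hv hr hD hpl hJ1
    have hDs : ∑ i, cdeg (Z i) = 3 * (e + 1 + 2) + 2 := hD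
    obtain ⟨f, hf, hfs⟩ := exists_sub_sum (fun i => cdeg (Z i) - if i ∈ J then 1 else 0) 3 (by
      have h1 : ∑ i, (cdeg (Z i) - if i ∈ J then 1 else 0) + ∑ i, (if i ∈ J then 1 else 0) =
          ∑ i, cdeg (Z i) := by
        rw [← Finset.sum_add_distrib]
        refine Finset.sum_congr rfl fun i _ => ?_
        split_ifs with h
        · have := hJ1 i h; omega
        · omega
      have h2 : ∑ i, (if i ∈ J then 1 else 0) = 8 := by simp [hJ]
      omega)
    obtain ⟨U, hU, hfU⟩ := pick p Z f (fun i => (hf i).trans (Nat.sub_le _ _))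
    obtain ⟨l, hl, h1, h2, -⟩ := generic_dl
      (ne_top_of_finrank (by omega : Module.finrank k U < 4)) p Z ∅ (by simp)
    have h3 := hpl l hl
    have hle : ∀ i ∈ Finset.univ, f i ≤ cdl (LinearMap.ker l) (p i) (Z i) := fun i _ =>
      (hfU i).trans (cdl_mono h1 _ _)
    have h4 : ∑ i, f i ≤ dl (LinearMap.ker l) p Z := Finset.sum_le_sum hle
    have heq := (Finset.sum_eq_sum_iff_of_le hle).1 (by
      have : dl (LinearMap.ker l) p Z = ∑ i, cdl (LinearMap.ker l) (p i) (Z i) := rfl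
      omega)
    have hres := D_res_lin l p Z
    refine ih (hv.res (lin l)) (Rel.res (e := e + 2) (m := 1) hr (lin_hom l)) (by omega)
      (fun l' hl' => (dl_res _ _ _ _).trans (hpl l' hl')) ?_
    intro i hi
    have h5 := cdeg_res_lin l (p i) (Z i)
    have h6 := heq i (Finset.mem_univ _)
    have h7 := hf i
    have h8 := hJ1 i hi
    simp only [if_pos hi] at h7
    simp only [res]
    omega

end

end Terr

open MvPolynomial

namespace Terr

open scoped Classical

noncomputable section

set_option linter.unusedSectionVars false

variable {k : Type*} [Field k] {ι : Type*} [Fintype ι]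

lemma matC1 (x : Matrix (Fin 4) (Fin 4) k) (c ca : Fin 4 → k) (hc : ∀ i, c i ≠ 0)
    (hca : ∀ i, ca i ≠ 0)
    (h : ∀ i j, (if i = j then ca i else 0) + ∑ t, c t * x t i * x t j = 0) (u v : Fin 4)
    (huv : u ≠ v) : ∑ i, (ca i)⁻¹ * x u i * x v i = 0 := by
  have h1 : (-(Matrix.diagonal (fun i => (ca i)⁻¹)) * x.transpose * Matrix.diagonal c) * x = 1 := by
    have h2 : x.transpose * Matrix.diagonal c * x = - Matrix.diagonal ca := by
      ext i j
      have h3 := h i j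
      rw [Matrix.mul_apply]
      simp only [Matrix.mul_diagonal, Matrix.transpose_apply, Matrix.neg_apply,
        Matrix.diagonal_apply]
      have h4 : ∑ t, x t i * c t * x t j = ∑ t, c t * x t i * x t j :=
        Finset.sum_congr rfl fun t _ => by ring
      rw [h4]
      linear_combination h3
    rw [Matrix.mul_assoc, Matrix.mul_assoc, ← Matrix.mul_assoc x.transpose, h2, neg_mul_neg,
      Matrix.diagonal_mul_diagonal]
    simp [hca]
  rw [mul_eq_one_comm] at h1
  have h4 := congrFun (congrFun h1 u) v
  rw [← Matrix.mul_assoc, Matrix.mul_diagonal, Matrix.one_apply_ne huv, neg_mul, Matrix.mul_neg,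
    Matrix.neg_apply, Matrix.mul_apply] at h4
  have h5 := (mul_eq_zero.1 h4).resolve_right (hc v)
  rw [neg_eq_zero] at h5
  rw [← h5]
  refine Finset.sum_congr rfl fun i _ => ?_
  rw [Matrix.diagonal_mul, Matrix.transpose_apply]; ring

lemma perp_unique (v : Fin 3 → Fin 4 → k) (hv : LinearIndependent k v) (d d' : Fin 4 → k)
    (hd : d ≠ 0) (h : ∀ j, ∑ i, v j i * d i = 0) (h' : ∀ j, ∑ i, v j i * d' i = 0) :
    ∃ c : k, d' = c • d := by
  let M : Matrix (Fin 3) (Fin 4) k := v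
  have hr : M.rank = 3 := by
    have : LinearIndependent k M.row := hv
    rw [this.rank_matrix]; simp
  have hk := LinearMap.finrank_range_add_finrank_ker M.mulVecLin
  rw [show Module.finrank k (LinearMap.range M.mulVecLin) = M.rank from rfl, hr,
    Module.finrank_fin_fun] at hk
  have hk1 : Module.finrank k (LinearMap.ker M.mulVecLin) = 1 := by omega
  have hm : d ∈ LinearMap.ker M.mulVecLin := by
    rw [LinearMap.mem_ker]; funext j; exact h j
  have hm' : d' ∈ LinearMap.ker M.mulVecLin := by
    rw [LinearMap.mem_ker]; funext j; exact h' j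
  obtain ⟨c, hc⟩ := (finrank_eq_one_iff_of_nonzero' (⟨d, hm⟩ : LinearMap.ker M.mulVecLin)
    (fun h => hd (congrArg Subtype.val h))).1 hk1 ⟨d', hm'⟩
  exact ⟨c, (congrArg Subtype.val hc).symm⟩

lemma li_dual {f : Fin 4 → Fin 4 → k} (hf : LinearIndependent k f) (l : (Fin 4 → k) →ₗ[k] k)
    (h : ∀ j, l (f j) = 0) : l = 0 := by
  have hs := hf.span_eq_top_of_card_eq_finrank (by simp)
  refine LinearMap.ext_on_range (v := f) hs ?_
  intro i; simp [h i]

lemma update_inj {κ : Type*} {a : Fin 4 → κ} (ha : Function.Injective a) (j : Fin 4) {i : κ}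
    (hi : ∀ m, m ≠ j → a m ≠ i) : Function.Injective (Function.update a j i) := by
  intro m m' h
  by_cases hm : m = j <;> by_cases hm' : m' = j
  · rw [hm, hm']
  · subst hm; simp [Function.update_of_ne hm'] at h; exact absurd h.symm (hi _ hm')
  · subst hm'; simp [Function.update_of_ne hm] at h; exact absurd h (hi _ hm)
  · simp [Function.update_of_ne hm, Function.update_of_ne hm'] at h; exact ha h

variable {κ : Type*}

lemma inj4 {a b c d : κ} (h1 : a ≠ b) (h2 : a ≠ c) (h3 : a ≠ d) (h4 : b ≠ c) (h5 : b ≠ d)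
    (h6 : c ≠ d) : Function.Injective ![a, b, c, d] := by
  intro i j hij
  fin_cases i <;> fin_cases j <;>
    simp [h1, h2, h3, h4, h5, h6, h1.symm, h2.symm, h3.symm, h4.symm, h5.symm, h6.symm] at hij ⊢

set_option maxHeartbeats 1000000 in
/-- key dependency in the Castelnuovo argument -/
lemma castel_key (x : κ → Fin 4 → k)
    (H1 : ∀ f : Fin 4 → κ, Function.Injective f → LinearIndependent k (fun j => x (f j)))
    (a : Fin 4 → κ) (hx : ∀ j, x (a j) = Pi.single j 1)
    (H2 : ∀ b : Fin 4 → κ, Function.Injective (Sum.elim a b) → ∃ ca c : Fin 4 → k,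
      (∀ i, ca i ≠ 0) ∧ (∀ i, c i ≠ 0) ∧ ∀ l h : (Fin 4 → k) →ₗ[k] k,
        ∑ j, ca j * l (x (a j)) * h (x (a j)) + ∑ j, c j * l (x (b j)) * h (x (b j)) = 0)
    (ha : Function.Injective a) (b0 b1 b2 q q' : κ)
    (hinj : Function.Injective (Sum.elim a ![b0, b1, b2, q]))
    (hinj' : Function.Injective (Sum.elim a ![b0, b1, b2, q'])) (hqq : q ≠ q')
    (hnz : ∀ i, (∀ j, a j ≠ i) → ∀ j, x i j ≠ 0) :
    ∃ s t : k, ∀ i, (x b2 i)⁻¹ = s * (x b0 i)⁻¹ + t * (x b1 i)⁻¹ := by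
  have hb : ∀ q, Function.Injective (Sum.elim a ![b0, b1, b2, q]) →
      Function.Injective ![b0, b1, b2, q] := fun q h => by
    have := h.comp Sum.inr_injective
    simpa using this
  have hbn : ∀ (m : Fin 4) i, x (![b0, b1, b2, q] m) i ≠ 0 := by
    intro m i
    apply hnz
    intro j hj
    have : Sum.inl j = Sum.inr m := hinj (by simpa using hj)
    simp at this
  have n0 := hbn 0
  have n1 := hbn 1
  have n2 := hbn 2
  simp only [Matrix.cons_val] at n0 n1 n2
  have dual : ∀ q, Function.Injective (Sum.elim a ![b0, b1, b2, q]) →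
      ∃ δ : Fin 4 → k, (∀ i, δ i ≠ 0) ∧ ∀ u v, u ≠ v →
        ∑ i, δ i * x (![b0, b1, b2, q] u) i * x (![b0, b1, b2, q] v) i = 0 := by
    intro q hq
    obtain ⟨ca, c, hca, hc, hlh⟩ := H2 _ hq
    refine ⟨fun i => (ca i)⁻¹, fun i => inv_ne_zero (hca i), ?_⟩
    apply matC1 (fun t => x (![b0, b1, b2, q] t)) c ca hc hca
    intro i j
    have h := hlh (LinearMap.proj i) (LinearMap.proj j)
    have e1 : ∑ m, ca m * (LinearMap.proj i : (Fin 4 → k) →ₗ[k] k) (x (a m)) *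
        (LinearMap.proj j : (Fin 4 → k) →ₗ[k] k) (x (a m)) = if i = j then ca i else 0 := by
      simp only [hx, LinearMap.proj_apply, Pi.single_apply]
      rw [Finset.sum_eq_single i (by intro m _ hm; simp [Ne.symm hm]) (by simp)]
      by_cases hij : i = j
      · simp [hij]
      · simp [hij, Ne.symm hij]
    rw [e1] at h
    exact h
  obtain ⟨δ, hδ0, hδ⟩ := dual q hinj
  obtain ⟨δ', hδ0', hδ'⟩ := dual q' hinj'
  have li3 : LinearIndependent k (fun j : Fin 3 => x (![b0, b1, b2] j)) := by
    have := (H1 _ (hb q hinj)).comp (Fin.castSucc : Fin 3 → Fin 4) (Fin.castSucc_injective 3)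
    convert this using 1
    funext j
    fin_cases j <;> rfl
  by_cases hli : LinearIndependent k (![fun i => x b0 i * x b1 i, fun i => x b0 i * x b2 i,
      fun i => x b1 i * x b2 i] : Fin 3 → Fin 4 → k)
  · exfalso
    obtain ⟨c, hc⟩ := perp_unique _ hli δ δ' (fun h => hδ0 0 (congrFun h 0)) (by
      intro j
      fin_cases j
      · simpa [mul_comm, mul_left_comm, mul_assoc] using hδ 0 1 (by decide)
      · simpa [mul_comm, mul_left_comm, mul_assoc] using hδ 0 2 (by decide)
      · simpa [mul_comm, mul_left_comm, mul_assoc] using hδ 1 2 (by decide)) (by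
      intro j
      fin_cases j
      · simpa [mul_comm, mul_left_comm, mul_assoc] using hδ' 0 1 (by decide)
      · simpa [mul_comm, mul_left_comm, mul_assoc] using hδ' 0 2 (by decide)
      · simpa [mul_comm, mul_left_comm, mul_assoc] using hδ' 1 2 (by decide))
    have hc0 : c ≠ 0 := by
      rintro rfl
      exact hδ0' 0 (by simp [hc])
    have hδq' : ∀ u : Fin 3, ∑ i, δ i * x (![b0, b1, b2] u) i * x q' i = 0 := by
      intro u
      have h1 := hδ' u.castSucc 3 (by fin_cases u <;> decide)
      have h2 : c * ∑ i, δ i * x (![b0, b1, b2] u) i * x q' i = 0 := by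
        rw [← h1, Finset.mul_sum]
        refine Finset.sum_congr rfl fun i _ => ?_
        rw [hc]
        fin_cases u <;> simp [mul_assoc]
      exact (mul_eq_zero.1 h2).resolve_left hc0
    have hδq : ∀ u : Fin 3, ∑ i, δ i * x (![b0, b1, b2] u) i * x q i = 0 := by
      intro u
      have h1 := hδ u.castSucc 3 (by fin_cases u <;> decide)
      rw [← h1]
      fin_cases u <;> simp
    have hqn : x q ≠ 0 := by
      intro h; exact hbn 3 0 (by simp [h])
    obtain ⟨r, hr⟩ := perp_unique _ li3 (fun i => δ i * x q i) (fun i => δ i * x q' i) (by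
      intro h
      apply hqn
      funext i
      have := congrFun h i
      simpa [hδ0 i] using this) (by
      intro j; rw [← hδq j]
      exact Finset.sum_congr rfl fun i _ => by ring) (by
      intro j; rw [← hδq' j]
      exact Finset.sum_congr rfl fun i _ => by ring)
    have hinj4 : Function.Injective ![q, q', b0, b1] := by
      have h1 := hb q hinj
      have h2 := hb q' hinj'
      have e1 : b0 ≠ b1 := fun h => by simpa using @h1 0 1 (by simpa using h)
      have e2 : b0 ≠ q := fun h => by simpa using @h1 0 3 (by simpa using h)
      have e3 : b1 ≠ q := fun h => by simpa using @h1 1 3 (by simpa using h)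
      have e4 : b0 ≠ q' := fun h => by simpa using @h2 0 3 (by simpa using h)
      have e5 : b1 ≠ q' := fun h => by simpa using @h2 1 3 (by simpa using h)
      exact inj4 hqq e2.symm e3.symm e4.symm e5.symm e1
    have hl4 := Fintype.linearIndependent_iff.1 (H1 _ hinj4) ![r, -1, 0, 0] (by
      simp only [Fin.sum_univ_four]
      funext i
      have := congrFun hr i
      have h5 : x q' i = r * x q i := by
        have : δ i * x q' i = r * (δ i * x q i) := this
        apply mul_left_cancel₀ (hδ0 i)
        rw [this]; ring
      simp [h5]) 1
    simp at hl4
  · rw [Fintype.linearIndependent_iff] at hli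
    push Not at hli
    obtain ⟨g, hg, j, hj⟩ := hli
    have hrel : ∀ i, g 0 * (x b2 i)⁻¹ + g 1 * (x b1 i)⁻¹ + g 2 * (x b0 i)⁻¹ = 0 := by
      intro i
      have h1 := congrFun hg i
      simp [Fin.sum_univ_three] at h1
      have a0 := n0 i
      have a1 := n1 i
      have a2 := n2 i
      field_simp
      linear_combination h1
    have hg0 : g 0 ≠ 0 := by
      intro h0
      have hz : ∀ i, g 1 * x b0 i + g 2 * x b1 i = 0 := by
        intro i
        have h1 := hrel i
        have a0 := n0 i
        have a1 := n1 i
        have a2 := n2 i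
        rw [h0] at h1
        field_simp at h1
        apply mul_left_cancel₀ a2
        linear_combination h1
      have h3 := Fintype.linearIndependent_iff.1 li3 ![g 1, g 2, 0] (by
        simp only [Fin.sum_univ_three]
        funext i
        simpa using hz i)
      have h4 := h3 0
      have h5 := h3 1
      simp at h4 h5
      apply hj
      fin_cases j
      · exact h0
      · exact h4
      · exact h5
    refine ⟨-(g 2) / g 0, -(g 1) / g 0, fun i => ?_⟩
    have h1 := hrel i
    field_simp
    linear_combination h1

end

end Terr

open MvPolynomial

namespace Terr

open scoped Classical

noncomputable section

set_option linter.unusedSectionVars false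

variable {k : Type*} [Field k] {κ : Type*}

/-- coefficients of the product of three linear forms -/
def row3 (B A : Fin 3 → k) : Fin 4 → k :=
  ![B 0 * B 1 * B 2, B 0 * B 1 * A 2 + B 0 * A 1 * B 2 + A 0 * B 1 * B 2,
    B 0 * A 1 * A 2 + A 0 * B 1 * A 2 + A 0 * A 1 * B 2, A 0 * A 1 * A 2]

lemma row3_eq (B A : Fin 3 → k) (s t : k) :
    ∑ j, row3 B A j * stdRNCvec k 3 s t j = ∏ j, (s * B j + t * A j) := by
  simp [Fin.sum_univ_four, Fin.prod_univ_three, stdRNCvec, row3]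
  ring

lemma castel_curve (β α : Fin 4 → k) (h : ∀ i j, i ≠ j → α i * β j - β i * α j ≠ 0) :
    ∃ g : (Fin 4 → k) ≃ₗ[k] (Fin 4 → k),
      (∀ s t i, g (stdRNCvec k 3 s t) i = ∏ j : Fin 3, (s * β (i.succAbove j) + t * α (i.succAbove j))) ∧
      ∀ m, ∃ c : k, c ≠ 0 ∧ Pi.single m 1 = c • g (stdRNCvec k 3 (α m) (-β m)) := by
  let M : Matrix (Fin 4) (Fin 4) k := fun i => row3 (fun j => β (i.succAbove j)) (fun j => α (i.succAbove j))
  have h1 : ∀ s t i, M.mulVecLin (stdRNCvec k 3 s t) i =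
      ∏ j : Fin 3, (s * β (i.succAbove j) + t * α (i.succAbove j)) := by
    intro s t i
    rw [← row3_eq]
    rfl
  have h2 : ∀ m, ∃ c : k, c ≠ 0 ∧ Pi.single m 1 = c • M.mulVecLin (stdRNCvec k 3 (α m) (-β m)) := by
    intro m
    have h3 : M.mulVecLin (stdRNCvec k 3 (α m) (-β m)) m ≠ 0 := by
      rw [h1, Finset.prod_ne_zero_iff]
      intro j _
      have := h m (m.succAbove j) (Fin.succAbove_ne m j).symm
      intro h0; apply this; linear_combination h0
    refine ⟨(M.mulVecLin (stdRNCvec k 3 (α m) (-β m)) m)⁻¹, inv_ne_zero h3, ?_⟩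
    funext i
    by_cases hi : i = m
    · subst hi
      simp only [Pi.single_eq_same, Pi.smul_apply, smul_eq_mul]
      rw [inv_mul_cancel₀ h3]
    · rw [Pi.single_eq_of_ne hi, Pi.smul_apply, h1 _ _ i]
      obtain ⟨j, hj⟩ := Fin.exists_succAbove_eq (Ne.symm hi)
      rw [Finset.prod_eq_zero (Finset.mem_univ j)]
      · simp
      · rw [hj]; ring
  have hs : Function.Surjective M.mulVecLin := by
    rw [← LinearMap.range_eq_top, eq_top_iff, ← (Pi.basisFun k (Fin 4)).span_eq, Submodule.span_le]
    rintro _ ⟨m, rfl⟩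
    obtain ⟨c, -, hc⟩ := h2 m
    rw [Pi.basisFun_apply, hc]
    exact Submodule.smul_mem _ _ (LinearMap.mem_range_self _ _)
  refine ⟨LinearEquiv.ofBijective M.mulVecLin ⟨LinearMap.injective_iff_surjective.2 hs, hs⟩, h1, h2⟩

lemma sum_elim_inj {a b : Fin 4 → κ} (ha : Function.Injective a) (hb : Function.Injective b)
    (h : ∀ i j, a i ≠ b j) : Function.Injective (Sum.elim a b) :=
  ha.sumElim hb h

lemma castel_std [Fintype κ] (hκ : 9 ≤ Fintype.card κ) (x : κ → Fin 4 → k)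
    (H1 : ∀ f : Fin 4 → κ, Function.Injective f → LinearIndependent k (fun j => x (f j)))
    (a : Fin 4 → κ) (hx : ∀ j, x (a j) = Pi.single j 1)
    (H2 : ∀ b : Fin 4 → κ, Function.Injective (Sum.elim a b) → ∃ ca c : Fin 4 → k,
      (∀ i, ca i ≠ 0) ∧ (∀ i, c i ≠ 0) ∧ ∀ l h : (Fin 4 → k) →ₗ[k] k,
        ∑ j, ca j * l (x (a j)) * h (x (a j)) + ∑ j, c j * l (x (b j)) * h (x (b j)) = 0)
    (ha : Function.Injective a) :
    ∃ g : (Fin 4 → k) ≃ₗ[k] (Fin 4 → k), ∀ i, ∃ s t c : k, c ≠ 0 ∧ (s ≠ 0 ∨ t ≠ 0) ∧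
      x i = c • g (stdRNCvec k 3 s t) := by
  let A : Finset κ := Finset.univ.image a
  have hA : A.card = 4 := by
    rw [Finset.card_image_of_injective _ ha]; simp
  have hmA : ∀ i, i ∉ A ↔ ∀ j, a j ≠ i := by
    intro i; simp [A]
  have hnz : ∀ i, (∀ j, a j ≠ i) → ∀ j, x i j ≠ 0 := by
    intro i hi j h0
    have h1 := li_dual (H1 _ (update_inj ha j (i := i) fun m _ => hi m)) (LinearMap.proj j) (by
      intro m
      by_cases hm : m = j
      · subst hm; simpa using h0
      · simp [Function.update_of_ne hm, hx, Ne.symm hm])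
    have := congrArg (fun l : (Fin 4 → k) →ₗ[k] k => l (Pi.single j 1)) h1
    simp at this
  have pickc : ∀ T : Finset κ, T.card < 9 → ∃ i, i ∉ T := by
    intro T hT
    by_contra h
    push Not at h
    have : T = Finset.univ := Finset.eq_univ_iff_forall.2 h
    rw [this, Finset.card_univ] at hT
    omega
  obtain ⟨b0, hb0⟩ := pickc A (by omega)
  obtain ⟨b1, hb1⟩ := pickc (insert b0 A) (by rw [Finset.card_insert_of_notMem hb0]; omega)
  have hb1c : (insert b1 (insert b0 A)).card = 6 := by
    rw [Finset.card_insert_of_notMem hb1, Finset.card_insert_of_notMem hb0]; omega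
  have hb1' := hb1
  rw [Finset.mem_insert, not_or] at hb1'
  have n0 := hnz b0 ((hmA _).1 hb0)
  have n1 := hnz b1 ((hmA _).1 hb1'.2)
  have key : ∀ i, i ∉ A → ∃ s t : k, ∀ j, (x i j)⁻¹ = s * (x b0 j)⁻¹ + t * (x b1 j)⁻¹ := by
    intro i hi
    by_cases hi0 : i = b0
    · exact ⟨1, 0, fun j => by simp [hi0]⟩
    by_cases hi1 : i = b1
    · exact ⟨0, 1, fun j => by simp [hi1]⟩
    have hi2 : i ∉ insert b1 (insert b0 A) := by simp [hi0, hi1, hi]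
    obtain ⟨q, hq⟩ := pickc (insert i (insert b1 (insert b0 A))) (by
      rw [Finset.card_insert_of_notMem hi2]; omega)
    obtain ⟨q', hq'⟩ := pickc (insert q (insert i (insert b1 (insert b0 A)))) (by
      rw [Finset.card_insert_of_notMem hq, Finset.card_insert_of_notMem hi2]; omega)
    simp only [Finset.mem_insert, not_or] at hq hq' 
    have mk : ∀ r, r ≠ i → r ≠ b1 → r ≠ b0 → r ∉ A →
        Function.Injective (Sum.elim a ![b0, b1, i, r]) := by
      intro r h1 h2 h3 h4
      refine sum_elim_inj ha (inj4 (Ne.symm hb1'.1) (Ne.symm hi0) (Ne.symm h3) (Ne.symm hi1) (Ne.symm h2) (Ne.symm h1)) ?_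
      intro m j
      fin_cases j
      · exact (hmA _).1 hb0 m
      · exact (hmA _).1 hb1'.2 m
      · exact (hmA _).1 hi m
      · exact (hmA _).1 h4 m
    exact castel_key x H1 a hx H2 ha b0 b1 i q q' (mk q hq.1 hq.2.1 hq.2.2.1 hq.2.2.2)
      (mk q' hq'.2.1 hq'.2.2.1 hq'.2.2.2.1 hq'.2.2.2.2) (Ne.symm hq'.1) hnz
  obtain ⟨g, hg1, hg2⟩ := castel_curve (fun j => (x b0 j)⁻¹) (fun j => (x b1 j)⁻¹) (by
    intro i j hij h0
    have a1 := n0 i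
    have a2 := n0 j
    have a3 := n1 i
    have a4 := n1 j
    have h1 : x b0 i * x b1 j = x b0 j * x b1 i := by
      field_simp at h0
      linear_combination h0
    have hinj : Function.Injective (Function.update (Function.update a i b0) j b1) := by
      apply update_inj (update_inj ha i fun m _ => (hmA _).1 hb0 m)
      intro m hm
      by_cases hmi : m = i
      · subst hmi; simp; exact Ne.symm hb1'.1
      · rw [Function.update_of_ne hmi]; exact (hmA _).1 hb1'.2 m
    have h2 := li_dual (H1 _ hinj) (x b0 j • LinearMap.proj i - x b0 i • LinearMap.proj j) (by
      intro m
      by_cases hm : m = j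
      · subst hm; simp; linear_combination -h1
      · rw [Function.update_of_ne hm]
        by_cases hmi : m = i
        · subst hmi; simp; ring
        · rw [Function.update_of_ne hmi]
          simp [hx, Ne.symm hm, Ne.symm hmi])
    have := congrArg (fun l : (Fin 4 → k) →ₗ[k] k => l (Pi.single i 1)) h2
    simp [hij, Ne.symm hij, a2] at this)
  refine ⟨g, fun i => ?_⟩
  by_cases hi : i ∈ A
  · obtain ⟨m, -, rfl⟩ := Finset.mem_image.1 hi
    obtain ⟨c, hc, h⟩ := hg2 m
    exact ⟨_, _, c, hc, Or.inl (inv_ne_zero (n1 m)), by rw [hx, h]⟩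
  · obtain ⟨s, t, hst⟩ := key i hi
    have hn := hnz i ((hmA _).1 hi)
    have hP : ∏ j, (x i j)⁻¹ ≠ 0 := Finset.prod_ne_zero_iff.2 fun j _ => inv_ne_zero (hn j)
    refine ⟨s, t, (∏ j, (x i j)⁻¹)⁻¹, inv_ne_zero hP, ?_, ?_⟩
    · by_contra h
      push Not at h
      have := hst 0
      rw [h.1, h.2] at this
      simp [hn 0] at this
    · funext m
      rw [Pi.smul_apply, hg1, smul_eq_mul]
      simp only [← hst]
      rw [eq_inv_mul_iff_mul_eq₀ hP, Fin.prod_univ_succAbove _ m, mul_right_comm, inv_mul_cancel₀ (hn m), one_mul]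

lemma castel [Fintype κ] (hκ : 9 ≤ Fintype.card κ) (p : κ → Fin 4 → k)
    (H1 : ∀ f : Fin 4 → κ, Function.Injective f → LinearIndependent k (fun j => p (f j)))
    (H2 : ∀ a b : Fin 4 → κ, Function.Injective (Sum.elim a b) → ∃ ca c : Fin 4 → k,
      (∀ i, ca i ≠ 0) ∧ (∀ i, c i ≠ 0) ∧ ∀ l h : (Fin 4 → k) →ₗ[k] k,
        ∑ j, ca j * l (p (a j)) * h (p (a j)) + ∑ j, c j * l (p (b j)) * h (p (b j)) = 0) :
    ∃ g : (Fin 4 → k) ≃ₗ[k] (Fin 4 → k), ∀ i, ∃ s t c : k, c ≠ 0 ∧ (s ≠ 0 ∨ t ≠ 0) ∧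
      p i = c • g (stdRNCvec k 3 s t) := by
  obtain ⟨a⟩ := Function.Embedding.nonempty_of_card_le (α := Fin 4) (β := κ) (by simp; omega)
  let B : Module.Basis (Fin 4) k (Fin 4 → k) := basisOfLinearIndependentOfCardEqFinrank (H1 a a.injective) (by simp)
  let E := B.equivFun
  obtain ⟨g, hg⟩ := castel_std hκ (fun i => E (p i)) (by
    intro f hf
    exact (H1 f hf).map' E.toLinearMap (LinearEquiv.ker E)) a (by
    intro j
    have : p (a j) = B j := by simp [B]
    simp only [this]
    simp [E, Module.Basis.equivFun_apply, Finsupp.single_eq_pi_single]) (by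
    intro b hb
    obtain ⟨ca, c, h1, h2, h3⟩ := H2 a b hb
    exact ⟨ca, c, h1, h2, fun l h => h3 (l.comp E.toLinearMap) (h.comp E.toLinearMap)⟩) a.injective
  refine ⟨g.trans E.symm, fun i => ?_⟩
  obtain ⟨s, t, c, hc, hst, h⟩ := hg i
  refine ⟨s, t, c, hc, hst, ?_⟩
  rw [LinearEquiv.trans_apply, ← map_smul, ← h]; simp

end

end Terr

open MvPolynomial

namespace Terr

open scoped Classical

noncomputable section

set_option linter.unusedSectionVars false

variable {k : Type*} [Field k] {κ : Type*} {ι : Type*} [Fintype ι]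

/-- being on a twisted cubic -/
def OnCubic (g : (Fin 4 → k) ≃ₗ[k] (Fin 4 → k)) (v : Fin 4 → k) : Prop :=
  ∃ s t c : k, c ≠ 0 ∧ (s ≠ 0 ∨ t ≠ 0) ∧ v = c • g (stdRNCvec k 3 s t)

lemma castel_quadrics [Fintype κ] (hκ : 9 ≤ Fintype.card κ) (p : κ → Fin 4 → k)
    (hpl : ∀ l : (Fin 4 → k) →ₗ[k] k, l ≠ 0 → ∀ J : Finset κ, J.card = 4 → ∃ i ∈ J, l (p i) ≠ 0)
    (hq : ∀ J : Finset κ, J.card = 8 → ∃ c : κ → k, (∀ i ∈ J, c i ≠ 0) ∧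
      ∀ Q : MvPolynomial (Fin 4) k, Q.IsHomogeneous 2 → ∑ i ∈ J, c i * eval (p i) Q = 0) :
    ∃ g : (Fin 4 → k) ≃ₗ[k] (Fin 4 → k), ∀ i, OnCubic g (p i) := by
  refine castel hκ p ?_ ?_
  · intro f hf
    by_contra hli
    have hs : Submodule.span k (Set.range fun j => p (f j)) < ⊤ := by
      refine lt_of_le_of_ne le_top fun h => hli ?_
      exact linearIndependent_of_top_le_span_of_card_eq_finrank h.ge (by simp)
    obtain ⟨l, hl, hle⟩ := Submodule.exists_le_ker_of_lt_top _ hs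
    obtain ⟨i, hi, hn⟩ := hpl l hl (Finset.univ.image f) (by
      rw [Finset.card_image_of_injective _ hf]; simp)
    obtain ⟨j, -, rfl⟩ := Finset.mem_image.1 hi
    exact hn (hle (Submodule.subset_span ⟨j, rfl⟩))
  · intro a b hab
    obtain ⟨c, hc, h⟩ := hq (Finset.univ.image (Sum.elim a b)) (by
      rw [Finset.card_image_of_injective _ hab]; simp)
    refine ⟨fun j => c (a j), fun j => c (b j), fun j => hc _ ?_, fun j => hc _ ?_, fun l h' => ?_⟩
    · exact Finset.mem_image.2 ⟨Sum.inl j, Finset.mem_univ _, rfl⟩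
    · exact Finset.mem_image.2 ⟨Sum.inr j, Finset.mem_univ _, rfl⟩
    · have h2 := h (lin l * lin h') ((lin_hom l).mul (lin_hom h'))
      rw [Finset.sum_image (fun x _ y _ hxy => hab hxy), Fintype.sum_sum_type] at h2
      simpa [eval_lin, mul_assoc] using h2

lemma cdl_ge_one {L : Submodule k (Fin 4 → k)} {p : Fin 4 → k} {z : k × (Fin 4 → k)}
    (hz : 1 ≤ cdeg z) (hp : p ∈ L) : 1 ≤ cdl L p z := by
  unfold cdeg at hz
  unfold cdl
  split_ifs at hz ⊢ <;> simp_all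

lemma planes_pts {p : ι → Fin 4 → k} {Z : ι → k × (Fin 4 → k)} {L : Submodule k (Fin 4 → k)}
    (J : Finset ι) (hJ : ∀ i ∈ J, 1 ≤ cdeg (Z i)) (hL : ∀ i ∈ J, p i ∈ L) : J.card ≤ dl L p Z := by
  calc J.card = ∑ i ∈ J, 1 := by simp
    _ ≤ ∑ i ∈ J, cdl L (p i) (Z i) := Finset.sum_le_sum fun i hi => cdl_ge_one (hJ i hi) (hL i hi)
    _ ≤ dl L p Z := Finset.sum_le_sum_of_subset (Finset.subset_univ _)

lemma curveOf [Infinite k] {p : ι → Fin 4 → k} {Z : ι → k × (Fin 4 → k)} (T : Finset ι)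
    (hT : 9 ≤ T.card) (hTd : ∀ i ∈ T, 1 ≤ cdeg (Z i))
    (hpl : ∀ l : (Fin 4 → k) →ₗ[k] k, l ≠ 0 → dl (LinearMap.ker l) p Z ≤ 3)
    (hq : ∀ J : Finset ι, J ⊆ T → J.card = 8 → ∃ c : ι → k, (∀ i ∈ J, c i ≠ 0) ∧
      ∀ Q : MvPolynomial (Fin 4) k, Q.IsHomogeneous 2 → ∑ i ∈ J, c i * eval (p i) Q = 0) :
    ∃ g : (Fin 4 → k) ≃ₗ[k] (Fin 4 → k), ∀ i ∈ T, OnCubic g (p i) := by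
  obtain ⟨g, hg⟩ := castel_quadrics (κ := T) (by simpa using hT) (fun i => p i) (by
    intro l hl J hJ
    by_contra h
    push Not at h
    have h1 := planes_pts (p := p) (Z := Z) (L := LinearMap.ker l)
      (J.map (Function.Embedding.subtype _)) (by
        intro i hi
        obtain ⟨j, -, rfl⟩ := Finset.mem_map.1 hi
        exact hTd _ j.2) (by
        intro i hi
        obtain ⟨j, hj, rfl⟩ := Finset.mem_map.1 hi
        exact h _ hj)
    rw [Finset.card_map, hJ] at h1
    have := hpl l hl
    omega) (by
    intro J hJ
    obtain ⟨c, hc, h⟩ := hq (J.map (Function.Embedding.subtype _)) (by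
      intro i hi
      obtain ⟨j, -, rfl⟩ := Finset.mem_map.1 hi
      exact j.2) (by rw [Finset.card_map, hJ])
    refine ⟨fun i => c i, fun i hi => hc _ (Finset.mem_map.2 ⟨i, hi, rfl⟩), fun Q hQ => ?_⟩
    have := h Q hQ
    rw [Finset.sum_map] at this
    exact this)
  exact ⟨g, fun i hi => hg ⟨i, hi⟩⟩

end

end Terr

open MvPolynomial

namespace Terr

open scoped Classical

noncomputable section

set_option linter.unusedSectionVars false

variable {k : Type*} [Field k] {ι : Type*} [Fintype ι]

lemma normZ [CharZero k] {n : ℕ} {p : ι → Fin n → k} {d : ℕ} (hd : 1 ≤ d) (hne : ∀ i, p i ≠ 0)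
    (hnp : ∀ i j, i ≠ j → p j ∉ Submodule.span k {p i}) (w : ι → Fin n → k)
    (hw : ∀ F : MvPolynomial (Fin n) k, F.IsHomogeneous d → ∑ i, dv F (p i) (w i) = 0) :
    ∃ Z : ι → k × (Fin n → k), Valid p Z ∧ Rel d p Z ∧ ∀ i, (w i = 0 ↔ Z i = 0) := by
  have hc : ∀ i, ∃ z : k × (Fin n → k), (z.2 ≠ 0 → z.2 ∉ Submodule.span k {p i}) ∧
      (∀ F : MvPolynomial (Fin n) k, F.IsHomogeneous d →
        z.1 * eval (p i) F + dv F (p i) z.2 = dv F (p i) (w i)) ∧ (w i = 0 ↔ z = 0) := by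
    intro i
    by_cases h : w i ∈ Submodule.span k {p i}
    · obtain ⟨c, hc⟩ := Submodule.mem_span_singleton.1 h
      refine ⟨(d * c, 0), fun h => absurd rfl h, fun F hF => ?_, ?_⟩
      · rw [← hc, dv_smul_right, dv_self hF, dv_zero_right]; ring
      · have hd0 : (d : k) ≠ 0 := by exact_mod_cast (by omega : d ≠ 0)
        rw [← hc, smul_eq_zero, Prod.mk_eq_zero, mul_eq_zero]
        simp [hne i, hd0]
    · refine ⟨(0, w i), fun _ => h, fun F hF => by simp, ?_⟩
      simp
  choose Z h1 h2 h3 using hc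
  refine ⟨Z, ⟨hne, hnp, h1⟩, fun F hF => ?_, h3⟩
  rw [← hw F hF]
  exact Finset.sum_congr rfl fun i _ => h2 i F hF

lemma cres_zero_eval {n : ℕ} {q : MvPolynomial (Fin n) k} {p : Fin n → k} {z : k × (Fin n → k)}
    (hz : z ≠ 0) (h : cres q p z = 0) : eval p q = 0 := by
  by_contra h0
  apply hz
  simp only [cres, Prod.mk_eq_zero, smul_eq_zero, h0, false_or] at h
  obtain ⟨h1, h2⟩ := h
  rw [h2, dv_zero_right, add_zero, mul_eq_zero] at h1
  exact Prod.ext (h1.resolve_right h0) h2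

lemma cdeg_pos {n : ℕ} {z : k × (Fin n → k)} : 1 ≤ cdeg z ↔ z ≠ 0 := by
  rw [← not_iff_not, not_not, ← cdeg_eq_zero]; omega

lemma cdeg_res_le_one {n : ℕ} {q : MvPolynomial (Fin n) k} {p : Fin n → k} {z : k × (Fin n → k)}
    (h : eval p q = 0) : cdeg (cres q p z) ≤ 1 := by
  unfold cdeg
  simp only [cres, h, zero_smul]
  split_ifs <;> simp_all

lemma cdl_zero_of_notMem {n : ℕ} {L : Submodule k (Fin n → k)} {p : Fin n → k}
    {z : k × (Fin n → k)} (h : p ∉ L) : cdl L p z = 0 := by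
  by_contra h0
  exact h (mem_of_cdl (Nat.pos_of_ne_zero h0))

/-- hypothesis package for the forward direction -/
structure Fwd (d : ℕ) (p : ι → Fin 4 → k) : Prop where
  hd : 7 ≤ d
  hcard : Fintype.card ι = 1 + (3 * d + 1) / 2
  ne : ∀ i, p i ≠ 0
  nonprop : ∀ i j, i ≠ j → p j ∉ Submodule.span k {p i}
  span : ∀ l : (Fin 4 → k) →ₗ[k] k, l ≠ 0 → ∃ i, l (p i) ≠ 0
  min : ∀ B : Finset ι, B ≠ Finset.univ → ∀ w : ι → Fin 4 → k, (∀ i, i ∉ B → w i = 0) →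
    (∀ F : MvPolynomial (Fin 4) k, F.IsHomogeneous d → ∑ i, dv F (p i) (w i) = 0) → w = 0

lemma Fwd.conic [CharZero k] {d : ℕ} {p : ι → Fin 4 → k} (h : Fwd d p)
    {μ : (Fin 4 → k) →ₗ[k] k} (hμ : μ ≠ 0)
    {q : MvPolynomial (Fin 4) k} {m : ℕ} (hm : m = 1 ∨ m = 2)
    (hq : q.IsHomogeneous m) (hd : ¬ lin μ ∣ q) (A : Finset ι) (hp : ∀ i ∈ A, μ (p i) = 0)
    (hpq : ∀ i ∈ A, eval (p i) q = 0) : 2 * A.card ≤ m * d + 1 := by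
  by_contra hc
  push Not at hc
  have hd7 := h.hd
  obtain ⟨w, hw0, hw⟩ := lemmaB (κ := A) (p := fun i => p i) hμ hm (d := d) (by omega)
    (by exact_mod_cast (by omega : d ≠ 0)) hq hd (fun i => h.ne i) (fun i => hp i i.2)
    (fun i => hpq i i.2) (by simp; omega)
  have hA : A ≠ Finset.univ := by
    rintro rfl
    obtain ⟨i, hi⟩ := h.span μ hμ
    exact hi (hp i (Finset.mem_univ _))
  let w' : ι → Fin 4 → k := fun i => if hi : i ∈ A then w ⟨i, hi⟩ else 0
  have hw' := h.min A hA w' (fun i hi => by simp [w', hi]) (by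
    intro F hF
    rw [← hw F hF, ← Finset.sum_subset (Finset.subset_univ A), ← Finset.sum_attach A]
    · exact Finset.sum_congr rfl fun i _ => by simp [w']
    · intro i _ hi
      simp [w', hi, dv_zero_right])
  apply hw0
  funext i
  have := congrFun hw' i
  simpa [w'] using this

lemma Fwd.line [CharZero k] {d : ℕ} {p : ι → Fin 4 → k} (h : Fwd d p)
    {L : Submodule k (Fin 4 → k)} (hL : Module.finrank k L ≤ 2) (A : Finset ι)
    (hp : ∀ i ∈ A, p i ∈ L) : 2 * A.card ≤ d + 1 := by
  have : Infinite k := inferInstance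
  obtain ⟨μ, hμ, hLμ, -⟩ := exists_generic (ne_top_of_finrank (by omega : Module.finrank k L < 4)) ∅ (by simp)
  obtain ⟨ν, hν, hLν, -⟩ := line_plane p (fun _ => 0) hL μ
  have := h.conic hμ (Or.inl rfl) (lin_hom ν) (fun hd => hν (lin_dvd_lin hd)) A
    (fun i hi => hLμ (hp i hi)) (fun i hi => by rw [eval_lin]; exact hLν (hp i hi))
  omega

lemma Fwd.caseI [CharZero k] {d : ℕ} {p : ι → Fin 4 → k} (h : Fwd d p)
    {Z : ι → k × (Fin 4 → k)} (hv : Valid p Z) (hr : Rel d p Z) (hz : ∀ i, 1 ≤ cdeg (Z i))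
    (hDle : D Z ≤ 2 * Fintype.card ι)
    {l : (Fin 4 → k) →ₗ[k] k} (hl : l ≠ 0)
    (hmax : ∀ l' : (Fin 4 → k) →ₗ[k] k, l' ≠ 0 → dl (LinearMap.ker l') p Z ≤ dl (LinearMap.ker l) p Z)
    (hnp : NonPlanar p Z) : NonPlanar p (res (lin l) p Z) := by
  by_contra hpl
  obtain ⟨l', hl', hl'D⟩ := not_nonPlanar hpl
  have hd := h.hd
  have hc := h.hcard
  have hD1 := D_res_lin l p Z
  have h1 := dl_res (LinearMap.ker l') (lin l) p Z
  have h2 := hmax l' hl'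
  have h3 := hnp l hl
  have hr1 : Rel (d - 1) p (res (lin l) p Z) := Rel.res (m := 1) (by
    rwa [Nat.sub_add_cancel (by omega)]) (lin_hom l)
  have hv1 := hv.res (lin l)
  have h0 := lemma0 (by norm_num) _ hv1 hr1 (by omega)
  obtain ⟨L, hL, hLD⟩ := lemma1 (by norm_num) _ hv1 hr1 (by omega)
  set B : Finset ι := Finset.univ.filter fun i => p i ∈ L with hB
  have hBc := h.line hL B (fun i hi => (Finset.mem_filter.1 hi).2)
  have hcd := fun i => cdl_eq_of_dl_eq hLD i
  have hle : ∀ i ∈ Finset.univ, cdeg (res (lin l) p Z i) ≤ if i ∈ B then 2 else 0 := by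
    intro i _
    split_ifs with hi
    · exact cdeg_le_two _
    · rw [← hcd i, cdl_zero_of_notMem]
      intro hm; exact hi (Finset.mem_filter.2 ⟨Finset.mem_univ _, hm⟩)
  have hsB : ∑ i, (if i ∈ B then 2 else 0) = 2 * B.card := by
    simp [Finset.sum_ite_mem, mul_comm]
  have hDs : D (res (lin l) p Z) = ∑ i, cdeg (res (lin l) p Z i) := rfl
  have hsum := Finset.sum_le_sum hle
  have heq := (Finset.sum_eq_sum_iff_of_le hle).1 (by omega)
  have hcomp : ∀ i, cdeg (res (lin l) p Z i) + cdl (LinearMap.ker l) (p i) (Z i) = cdeg (Z i) :=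
    fun i => cdeg_res_lin l (p i) (Z i)
  obtain ⟨N, hN, hLN, hNT⟩ := exists_generic (ne_top_of_finrank (by omega : Module.finrank k L < 4))
    ((Finset.univ \ B).image p) (by
      intro v hv' hvL
      obtain ⟨i, hi, rfl⟩ := Finset.mem_image.1 hv'
      exact (Finset.mem_sdiff.1 hi).2 (Finset.mem_filter.2 ⟨Finset.mem_univ _, hvL⟩))
  have hNcomp : ∀ i, cdeg (res (lin N) p Z i) + cdl (LinearMap.ker N) (p i) (Z i) = cdeg (Z i) :=
    fun i => cdeg_res_lin N (p i) (Z i)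
  have hdlN : d + 1 ≤ dl (LinearMap.ker N) p Z := by
    have e1 := dl_res (LinearMap.ker N) (lin l) p Z
    have e2 := dl_mono hLN p (res (lin l) p Z)
    omega
  have hDU := D_res_lin N p Z
  have hUz : D (res (lin l) p (res (lin N) p Z)) = 0 := by
    rw [res_comm]
    apply D_res_zero_of_dl
    have e2 := dl_mono hLN p (res (lin l) p Z)
    have e3 := dl_le_D (LinearMap.ker N) p (res (lin l) p Z)
    omega
  have hUpl : dl (LinearMap.ker l) p (res (lin N) p Z) = D (res (lin N) p Z) := by
    have := D_res_lin l p (res (lin N) p Z)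
    omega
  obtain ⟨q, hq, hqd, hq0⟩ := lemmaP hl 2 (d - 1) (hv.res (lin N)) (Rel.res (m := 1) (by
    rwa [Nat.sub_add_cancel (by omega)]) (lin_hom N)) hUpl (by omega) (by omega)
  have hA := h.conic hl (Or.inr rfl) hq hqd (Finset.univ \ B) (by
    intro i hi
    have hiB := (Finset.mem_sdiff.1 hi).2
    have e1 := heq i (Finset.mem_univ _)
    rw [if_neg hiB] at e1
    have e2 := hcomp i
    have e3 := hz i
    exact mem_of_cdl (L := LinearMap.ker l) (z := Z i) (by omega)) (by
    intro i hi
    have e1 : p i ∉ LinearMap.ker N := hNT _ (Finset.mem_image_of_mem p hi)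
    have e2 := hNcomp i
    rw [cdl_zero_of_notMem e1] at e2
    have e3 := hz i
    exact cres_zero_eval (cdeg_pos.1 (by omega : 1 ≤ cdeg (res (lin N) p Z i))) (D_eq_zero.1 hq0 i))
  have hAc : (Finset.univ \ B).card + B.card = Fintype.card ι := by
    rw [Finset.card_sdiff_add_card_eq_card (Finset.subset_univ _), Finset.card_univ]
  omega

end

end Terr

open MvPolynomial

namespace Terr

open scoped Classical

noncomputable section

set_option linter.unusedSectionVars false

variable {k : Type*} [Field k] {ι : Type*} [Fintype ι]

/-- coordinates adapted to the cubic -/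
def co (g : (Fin 4 → k) ≃ₗ[k] (Fin 4 → k)) (j : Fin 4) : (Fin 4 → k) →ₗ[k] k :=
  (LinearMap.proj j).comp g.symm.toLinearMap

lemma co_apply (g : (Fin 4 → k) ≃ₗ[k] (Fin 4 → k)) (j : Fin 4) (v : Fin 4 → k) :
    co g j v = g.symm v j := rfl

/-- quadrics through the cubic -/
def quad (g : (Fin 4 → k) ≃ₗ[k] (Fin 4 → k)) (a b c e : Fin 4) : MvPolynomial (Fin 4) k :=
  lin (co g a) * lin (co g b) - lin (co g c) * lin (co g e)

lemma quad_hom (g : (Fin 4 → k) ≃ₗ[k] (Fin 4 → k)) (a b c e : Fin 4) :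
    (quad g a b c e).IsHomogeneous 2 :=
  ((lin_hom _).mul (lin_hom _)).sub ((lin_hom _).mul (lin_hom _))

lemma eval_quad (g : (Fin 4 → k) ≃ₗ[k] (Fin 4 → k)) (a b c e : Fin 4) (v : Fin 4 → k) :
    eval v (quad g a b c e) =
      g.symm v a * g.symm v b - g.symm v c * g.symm v e := by
  simp [quad, eval_lin, co_apply]

lemma onCubic_quad {g : (Fin 4 → k) ≃ₗ[k] (Fin 4 → k)} {v : Fin 4 → k} (hv : OnCubic g v)
    {a b c e : Fin 4} (h : (a : ℕ) + b = c + e) : eval v (quad g a b c e) = 0 := by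
  obtain ⟨s, t, r, -, -, rfl⟩ := hv
  rw [eval_quad]
  simp only [map_smul, LinearEquiv.symm_apply_apply, Pi.smul_apply, smul_eq_mul, stdRNCvec]
  have h1 : ∀ a b : Fin 4, (r * (s ^ (3 - (a : ℕ)) * t ^ (a : ℕ))) * (r * (s ^ (3 - (b : ℕ)) * t ^ (b : ℕ))) =
      r ^ 2 * (s ^ (6 - (a + b : ℕ)) * t ^ (a + b : ℕ)) := by
    intro a b
    rw [show 6 - (a + b : ℕ) = (3 - a) + (3 - b) by omega, pow_add, pow_add]; ring
  rw [h1, h1, h, sub_self]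

lemma onCubic_of_quad {g : (Fin 4 → k) ≃ₗ[k] (Fin 4 → k)} {v : Fin 4 → k} (hv : v ≠ 0)
    (h : ∀ a b c e : Fin 4, (a : ℕ) + b = c + e → eval v (quad g a b c e) = 0) : OnCubic g v := by
  have hy : g.symm v ≠ 0 := by simpa using hv
  have hvy : v = g (g.symm v) := by simp
  simp only [eval_quad] at h
  unfold OnCubic
  rw [hvy]
  generalize g.symm v = y at *
  have e1 := h 0 2 1 1 rfl
  have e2 := h 1 3 2 2 rfl
  have e3 := h 0 3 1 2 rfl
  by_cases h0 : y 0 = 0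
  · have h1 : y 1 = 0 := by
      have : y 1 * y 1 = 0 := by linear_combination -e1 + h0 * y 2
      simpa using this
    have h2 : y 2 = 0 := by
      have : y 2 * y 2 = 0 := by linear_combination -e2 + h1 * y 3
      simpa using this
    have h3 : y 3 ≠ 0 := by
      intro h3
      apply hy
      funext i
      fin_cases i <;> simpa
    refine ⟨0, 1, y 3, h3, Or.inr one_ne_zero, ?_⟩
    rw [← map_smul]
    congr 1
    funext i
    fin_cases i <;> simp [stdRNCvec, h0, h1, h2]
  · refine ⟨y 0, y 1, (y 0 ^ 2)⁻¹, inv_ne_zero (pow_ne_zero _ h0), Or.inl h0, ?_⟩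
    rw [← map_smul]
    congr 1
    have h4 : ∀ i, y 0 ^ 2 * y i = stdRNCvec k 3 (y 0) (y 1) i := by
      intro i
      fin_cases i <;> simp [stdRNCvec]
      · ring
      · linear_combination (y 0) * e1
      · linear_combination (y 0) * e3 + y 1 * e1
    funext i
    rw [Pi.smul_apply, ← h4, smul_eq_mul, inv_mul_cancel_left₀ (pow_ne_zero _ h0)]

lemma D_le_card {Z : ι → k × (Fin 4 → k)} {T : Finset ι} {m : ℕ} (h : ∀ i ∈ T, cdeg (Z i) ≤ m)
    (h' : ∀ i, i ∉ T → Z i = 0) : D Z ≤ m * T.card := by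
  have h1 : D Z = ∑ i ∈ T, cdeg (Z i) := by
    symm
    apply Finset.sum_subset (Finset.subset_univ _)
    intro i _ hi
    rw [h' i hi]; exact cdeg_eq_zero.2 rfl
  rw [h1, mul_comm]
  exact Finset.sum_le_card_nsmul _ _ _ h

/-- the case where the largest plane has degree at most three, and excess one -/
lemma Fwd.beta [CharZero k] {d : ℕ} {p : ι → Fin 4 → k} (h : Fwd d p)
    {Z : ι → k × (Fin 4 → k)} (hv : Valid p Z) (hr : Rel d p Z)
    (hz : ∀ i, cdeg (Z i) = 2) (hD : D Z = 3 * d + 3)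
    (hpl : ∀ l : (Fin 4 → k) →ₗ[k] k, l ≠ 0 → dl (LinearMap.ker l) p Z ≤ 3)
    (J : Finset ι) (hJ : J.card = 8) : ∃ c : ι → k, (∀ i ∈ J, c i ≠ 0) ∧
      ∀ Q : MvPolynomial (Fin 4) k, Q.IsHomogeneous 2 → ∑ i ∈ J, c i * eval (p i) Q = 0 := by
  have hd := h.hd
  by_cases hG : ∃ q ∈ J, ∃ G : MvPolynomial (Fin 4) k, G.IsHomogeneous 2 ∧
      (∀ i ∈ J, i ≠ q → eval (p i) G = 0) ∧ eval (p q) G ≠ 0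
  · obtain ⟨q, hq, G, hG, hG0, hGq⟩ := hG
    have hv' := hv.res G
    have hr' : Rel (d - 2) p (res G p Z) := Rel.res (m := 2) (by
      rwa [Nat.sub_add_cancel (by omega)]) hG
    have hpl' : ∀ l : (Fin 4 → k) →ₗ[k] k, l ≠ 0 → dl (LinearMap.ker l) p (res G p Z) ≤ 3 :=
      fun l hl => (dl_res _ _ _ _).trans (hpl l hl)
    have hq2 : 1 ≤ cdeg (res G p Z q) := by
      rw [cdeg_pos]
      intro h0
      exact hGq (cres_zero_eval (cdeg_pos.1 (by rw [hz q]; norm_num)) h0)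
    have hpos : 0 < D (res G p Z) := lt_of_lt_of_le hq2 (Finset.single_le_sum
      (f := fun i => cdeg (res G p Z i)) (fun _ _ => Nat.zero_le _) (Finset.mem_univ q))
    have hge := lemmaLG hv' hr' hpos (by omega) hpl'
    have hle : ∀ i ∈ Finset.univ, cdeg (res G p Z i) ≤ cdeg (Z i) - (if i ∈ J.erase q then 1 else 0) := by
      intro i _
      split_ifs with hi
      · rw [hz i]
        exact cdeg_res_le_one (hG0 i (Finset.mem_of_mem_erase hi) (Finset.ne_of_mem_erase hi))
      · rw [Nat.sub_zero]; exact cdeg_res_le _ _ _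
    have hs : ∑ i, (cdeg (Z i) - (if i ∈ J.erase q then 1 else 0)) + 7 = 3 * d + 3 := by
      have e1 : ∑ i, (if i ∈ J.erase q then 1 else 0) = 7 := by
        rw [Finset.sum_boole, Finset.filter_mem_eq_inter, Finset.univ_inter,
          Finset.card_erase_of_mem hq, hJ]
        rfl
      rw [← hD, ← e1, ← Finset.sum_add_distrib]
      refine Finset.sum_congr rfl fun i _ => ?_
      rw [hz i]; split_ifs <;> rfl
    have hsum : D (res G p Z) ≤ _ := Finset.sum_le_sum hle
    have heq := (Finset.sum_eq_sum_iff_of_le hle).1 (by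
      have : D (res G p Z) = ∑ i, cdeg (res G p Z i) := rfl
      omega)
    refine lemmaCc J hJ (d - 4) hv' (by rwa [show d - 4 + 2 = d - 2 by omega]) (by omega) hpl' ?_
    intro i _
    rw [heq i (Finset.mem_univ _), hz i]
    split_ifs <;> omega
  · push Not at hG
    let φ : homogeneousSubmodule (Fin 4) k 2 →ₗ[k] (J → k) :=
      { toFun := fun F i => eval (p i) F.1
        map_add' := by intros; ext; simp
        map_smul' := by intros; ext; simp [smul_eval] }
    have hφ : LinearMap.range φ < ⊤ := by
      refine lt_of_le_of_ne le_top fun htop => ?_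
      obtain ⟨q, hq⟩ := Finset.card_pos.1 (by omega : 0 < J.card)
      obtain ⟨G, hGq⟩ := LinearMap.range_eq_top.1 htop (Pi.single ⟨q, hq⟩ 1)
      have h1 := hG q hq G.1 G.2 (by
        intro i hi hiq
        have := congrFun hGq ⟨i, hi⟩
        rw [Pi.single_eq_of_ne (by simpa using hiq)] at this
        exact this)
      have := congrFun hGq ⟨q, hq⟩
      rw [Pi.single_eq_same] at this
      exact one_ne_zero (this.symm.trans h1)
    obtain ⟨f, hf, hle⟩ := Submodule.exists_le_ker_of_lt_top _ hφ
    let c : ι → k := fun i => if hi : i ∈ J then f (Pi.single ⟨i, hi⟩ 1) else 0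
    have hc : ∀ Q : MvPolynomial (Fin 4) k, Q.IsHomogeneous 2 → ∑ i ∈ J, c i * eval (p i) Q = 0 := by
      intro Q hQ
      have h1 : f (φ ⟨Q, hQ⟩) = 0 := hle (LinearMap.mem_range_self _ _)
      rw [LinearMap.pi_apply_eq_sum_univ f] at h1
      rw [← h1, ← Finset.sum_attach J]
      refine Finset.sum_congr rfl fun i _ => ?_
      simp only [c, i.2, dif_pos, smul_eq_mul]
      rw [mul_comm]
      congr 2
      ext j
      simp [Pi.single_apply, eq_comm]
    refine ⟨c, ?_, hc⟩
    let Z' : ι → k × (Fin 4 → k) := fun i => (c i, 0)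
    have hZJ : ∀ i, i ∉ J → c i = 0 := fun i hi => by simp [c, hi]
    have hv' : Valid p Z' := ⟨hv.ne, hv.nonprop, fun i h => absurd rfl h⟩
    have hr' : Rel 2 p Z' := by
      intro F hF
      rw [← hc F hF]
      rw [← Finset.sum_subset (Finset.subset_univ J)]
      · exact Finset.sum_congr rfl fun i _ => by simp [Z', dv_zero_right]
      · intro i _ hi; simp [Z', hZJ i hi, dv_zero_right]
    have hpl' : ∀ l : (Fin 4 → k) →ₗ[k] k, l ≠ 0 → dl (LinearMap.ker l) p Z' ≤ 3 := by
      intro l hl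
      refine le_trans (Finset.sum_le_sum fun i _ => ?_) (hpl l hl)
      by_cases hp : p i ∈ LinearMap.ker l
      · refine le_trans (le_trans (cdl_le_cdeg _ _ _) ?_) (cdl_ge_one (by rw [hz i]; norm_num) hp)
        unfold cdeg
        simp only [Z']
        split_ifs <;> simp_all
      · rw [cdl_zero_of_notMem hp]; omega
    have hpos : 0 < D Z' := by
      rw [Nat.pos_iff_ne_zero]
      intro h0
      rw [D_eq_zero] at h0
      apply hf
      refine LinearMap.pi_ext' fun i => LinearMap.ext_ring ?_
      have := congrArg Prod.fst (h0 i)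
      simpa [Z', c] using this
    have hge := lemmaLG hv' hr' hpos le_rfl hpl'
    intro i hi hci
    have hlt : D Z' ≤ 1 * (J.erase i).card := by
      apply D_le_card
      · intro j _
        unfold cdeg
        simp only [Z']
        split_ifs <;> simp_all
      · intro j hj
        rw [Finset.mem_erase, not_and_or, not_not] at hj
        rcases hj with rfl | hj
        · simp [Z', hci]
        · simp [Z', hZJ j hj]
    rw [Finset.card_erase_of_mem hi, hJ] at hlt
    omega

end

end Terr

open MvPolynomial

namespace Terr

open scoped Classical

noncomputable section

set_option linter.unusedSectionVars false

variable {k : Type*} [Field k] {ι : Type*} [Fintype ι]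

/-- the case where the largest plane has degree four -/
lemma Fwd.gamma [CharZero k] {d : ℕ} {p : ι → Fin 4 → k} (h : Fwd d p)
    {Z : ι → k × (Fin 4 → k)} (hv : Valid p Z) (hr : Rel d p Z) (hz : ∀ i, 1 ≤ cdeg (Z i))
    (hD : D Z = 3 * d + 3) {l : (Fin 4 → k) →ₗ[k] k} (hl4 : dl (LinearMap.ker l) p Z = 4)
    (hmax : ∀ l' : (Fin 4 → k) →ₗ[k] k, l' ≠ 0 → dl (LinearMap.ker l') p Z ≤ 4) :
    ∃ g : (Fin 4 → k) ≃ₗ[k] (Fin 4 → k), ∀ i, OnCubic g (p i) := by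
  have hd := h.hd
  have hc := h.hcard
  set Z1 := res (lin l) p Z with hZ1
  have hD1 : D Z1 + dl (LinearMap.ker l) p Z = D Z := D_res_lin l p Z
  have hv1 : Valid p Z1 := hv.res (lin l)
  have hr1 : Rel (d - 1) p Z1 := Rel.res (m := 1) (by
    rwa [Nat.sub_add_cancel (by omega)]) (lin_hom l)
  have hpl1 : ∀ l' : (Fin 4 → k) →ₗ[k] k, l' ≠ 0 → dl (LinearMap.ker l') p Z1 ≤ 3 := by
    intro l1 hl1
    by_contra hgt
    have e1 : dl (LinearMap.ker l1) p Z1 ≤ _ := dl_res (LinearMap.ker l1) (lin l) p Z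
    have e2 := hmax l1 hl1
    have hD2 := D_res_lin l1 p Z1
    have hr2 : Rel (d - 2) p (res (lin l1) p Z1) := Rel.res (m := 1) (by
      rwa [show d - 2 + 1 = d - 1 by omega]) (lin_hom l1)
    have hv2 := hv1.res (lin l1)
    have hpl2 : ∀ l' : (Fin 4 → k) →ₗ[k] k, l' ≠ 0 →
        dl (LinearMap.ker l') p (res (lin l1) p Z1) ≤ 4 := fun l' hl' =>
      ((dl_res _ _ _ _).trans (dl_res _ _ _ _)).trans (hmax l' hl')
    by_cases hnp : NonPlanar p (res (lin l1) p Z1)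
    · obtain ⟨l2, hl2, hm2⟩ := exists_max p (res (lin l1) p Z1) (fun l' => l' ≠ 0) exists_ne_zero_dual
      have := (lemmaG (d - 2) hv2 hr2 hnp (by omega) l2 hl2 hm2).1
      have := hpl2 l2 hl2
      omega
    · obtain ⟨l', hl', hl'D⟩ := not_nonPlanar hnp
      have := hpl2 l' hl'
      omega
  set T : Finset ι := Finset.univ.filter fun i => 1 ≤ cdeg (Z1 i) with hT
  have hTz : ∀ i, i ∉ T → Z1 i = 0 := by
    intro i hi
    by_contra h0
    exact hi (Finset.mem_filter.2 ⟨Finset.mem_univ _, cdeg_pos.2 h0⟩)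
  have hTd : ∀ i ∈ T, 1 ≤ cdeg (Z1 i) := fun i hi => (Finset.mem_filter.1 hi).2
  have hTc : D Z1 ≤ 2 * T.card := D_le_card (fun i _ => cdeg_le_two _) hTz
  obtain ⟨g, hg⟩ := curveOf T (by omega) hTd hpl1 (fun J hJT hJ => lemmaCc J hJ (d - 3) hv1
    (by rwa [show d - 3 + 2 = d - 1 by omega]) (by omega) hpl1 (fun i hi => hTd i (hJT hi)))
  refine ⟨g, fun i => onCubic_of_quad (h.ne i) fun a b c e habce => ?_⟩
  have hQ := quad_hom g a b c e
  set Q := quad g a b c e with hQdef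
  have hz1 : D (res Q p Z1) = 0 := by
    by_contra hne
    have e1 := lemmaLG (hv1.res Q) (e := d - 3) (Rel.res (m := 2) (by
      rwa [show d - 3 + 2 = d - 1 by omega]) hQ) (Nat.pos_of_ne_zero hne) (by omega)
      (fun l' hl' => (dl_res _ _ _ _).trans (hpl1 l' hl'))
    have e2 : D (res Q p Z1) ≤ 1 * T.card := by
      apply D_le_card
      · intro i hi
        exact cdeg_res_le_one (onCubic_quad (hg i hi) habce)
      · intro i hi
        rw [res, hTz i hi, cres]
        simp [dv_zero_right]
    have e3 : T.card ≤ Fintype.card ι := Finset.card_le_univ _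
    omega
  have hz2 : D (res Q p Z) = 0 := by
    by_contra hne
    have e1 := lemma0 (by norm_num) (d - 2) (hv.res Q) (Rel.res (m := 2) (by
      rwa [show d - 2 + 2 = d by omega]) hQ) (Nat.pos_of_ne_zero hne)
    have e2 := D_res_lin l p (res Q p Z)
    rw [res_comm, ← hZ1] at e2
    have e3 := dl_res (LinearMap.ker l) Q p Z
    omega
  exact cres_zero_eval (cdeg_pos.1 (hz i)) (D_eq_zero.1 hz2 i)

theorem Fwd.main [CharZero k] {d : ℕ} {p : ι → Fin 4 → k} (h : Fwd d p)
    (w : ι → Fin 4 → k) (hw0 : w ≠ 0)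
    (hw : ∀ F : MvPolynomial (Fin 4) k, F.IsHomogeneous d → ∑ i, dv F (p i) (w i) = 0) :
    ∃ g : (Fin 4 → k) ≃ₗ[k] (Fin 4 → k), ∀ i, OnCubic g (p i) := by
  have hd := h.hd
  have hc := h.hcard
  have hwi : ∀ i, w i ≠ 0 := by
    intro i hi
    refine hw0 (h.min (Finset.univ.erase i) ?_ w ?_ hw)
    · intro he
      have := Finset.mem_univ i
      rw [← he] at this
      exact Finset.notMem_erase _ _ this
    · intro j hj
      simp at hj
      rw [hj, hi]
  obtain ⟨Z, hv, hr, hwZ⟩ := normZ (by omega) h.ne h.nonprop w hw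
  have hz : ∀ i, 1 ≤ cdeg (Z i) := fun i => cdeg_pos.2 fun h0 => hwi i ((hwZ i).2 h0)
  have hDle : D Z ≤ 2 * Fintype.card ι := by
    have := D_le_card (Z := Z) (T := Finset.univ) (fun i _ => cdeg_le_two _) (by simp)
    simpa using this
  have hnp : NonPlanar p Z := by
    by_contra hnp
    obtain ⟨l', hl', hl'D⟩ := not_nonPlanar hnp
    obtain ⟨i, hi⟩ := h.span l' hl'
    apply hi
    have e1 := cdl_eq_of_dl_eq hl'D i
    have e2 := hz i
    exact mem_of_cdl (L := LinearMap.ker l') (z := Z i) (by omega)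
  obtain ⟨l, hl, hmax⟩ := exists_max p Z (fun l' => l' ≠ 0) exists_ne_zero_dual
  have hnp1 := h.caseI hv hr hz hDle hl hmax hnp
  have hD1 := D_res_lin l p Z
  have hr1 : Rel (d - 1) p (res (lin l) p Z) := Rel.res (m := 1) (by
    rwa [Nat.sub_add_cancel (by omega)]) (lin_hom l)
  have hD1' : 3 * (d - 1) + 2 ≤ D (res (lin l) p Z) := by
    by_contra hlt
    obtain ⟨l1, hl1, hm1⟩ := exists_max p (res (lin l) p Z) (fun l' => l' ≠ 0) exists_ne_zero_dual
    obtain ⟨e1, e2, e3⟩ := lemmaG (d - 1) (hv.res _) hr1 hnp1 (by omega) l1 hl1 hm1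
    have e4 := e3 (by omega)
    have e5 := dl_res (LinearMap.ker l1) (lin l) p Z
    have e6 := hmax l1 hl1
    omega
  by_cases hm3 : dl (LinearMap.ker l) p Z ≤ 3
  · have hpl : ∀ l' : (Fin 4 → k) →ₗ[k] k, l' ≠ 0 → dl (LinearMap.ker l') p Z ≤ 3 :=
      fun l' hl' => (hmax l' hl').trans hm3
    have hge := lemmaLG hv hr (by omega) (by omega) hpl
    have hq : ∀ J : Finset ι, J ⊆ Finset.univ → J.card = 8 → ∃ c : ι → k, (∀ i ∈ J, c i ≠ 0) ∧
        ∀ Q : MvPolynomial (Fin 4) k, Q.IsHomogeneous 2 → ∑ i ∈ J, c i * eval (p i) Q = 0 := by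
      intro J _ hJ
      by_cases hD2 : D Z = 3 * d + 2
      · exact lemmaCc J hJ (d - 2) hv (by rwa [show d - 2 + 2 = d by omega]) (by omega) hpl
          (fun i _ => hz i)
      · refine h.beta hv hr ?_ (by omega) hpl J hJ
        have hle : ∀ i ∈ Finset.univ, cdeg (Z i) ≤ 2 := fun i _ => cdeg_le_two _
        have hs : ∑ _i : ι, 2 = 2 * Fintype.card ι := by simp [mul_comm]
        have hDs : D Z = ∑ i, cdeg (Z i) := rfl
        have heq := (Finset.sum_eq_sum_iff_of_le hle).1 (by omega)
        exact fun i => heq i (Finset.mem_univ _)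
    obtain ⟨g, hg⟩ := curveOf Finset.univ (by rw [Finset.card_univ]; omega) (fun i _ => hz i) hpl hq
    exact ⟨g, fun i => hg i (Finset.mem_univ _)⟩
  · have hm4 : dl (LinearMap.ker l) p Z = 4 := by omega
    exact h.gamma hv hr hz (by omega) hm4 (fun l' hl' => (hmax l' hl').trans hm4.le)

end

end Terr

open MvPolynomial

namespace Terr

open scoped Classical

noncomputable section

set_option linter.unusedSectionVars false

variable {k : Type*} [Field k]

/-- gradient evaluation map -/
def grad (n d : ℕ) (S : Finset (ProjSpace k n)) :
    homogeneousSubmodule (Fin (n+1)) k d →ₗ[k] (S × Fin (n+1) → k) where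
  toFun F := fun x => eval x.1.1.rep (pderiv x.2 F.1)
  map_add' := by intros; ext; simp
  map_smul' := by intros; ext; simp [smul_eval]

lemma mem_dbl {n : ℕ} {v : Fin n → k} {F : MvPolynomial (Fin n) k} :
    F ∈ doubleVanishing k v ↔ eval v F = 0 ∧ ∀ j, eval v (pderiv j F) = 0 := by
  simp only [doubleVanishing, Submodule.mem_inf, LinearMap.mem_ker, Submodule.mem_iInf,
    LinearMap.comp_apply, evalLM, AlgHom.toLinearMap_apply]
  rfl

lemma h0_eq [CharZero k] {n d : ℕ} (hd : 1 ≤ d) (S : Finset (ProjSpace k n)) :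
    h0 k n d S = Module.finrank k (LinearMap.ker (grad n d S)) := by
  unfold h0
  suffices hW : homogeneousSubmodule (Fin (n+1)) k d ⊓ ⨅ p ∈ S, doubleVanishing k p.rep =
      (LinearMap.ker (grad n d S)).map (homogeneousSubmodule (Fin (n+1)) k d).subtype by
    rw [hW, Submodule.finrank_map_subtype_eq]
  ext F
  simp only [Submodule.mem_inf, Submodule.mem_iInf, Submodule.mem_map, LinearMap.mem_ker,
    Submodule.subtype_apply, mem_dbl]
  constructor
  · rintro ⟨hF, h⟩
    exact ⟨⟨F, hF⟩, by ext x; exact (h x.1.1 x.1.2).2 x.2, rfl⟩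
  · rintro ⟨⟨F, hF⟩, h, rfl⟩
    refine ⟨hF, fun q hq => ?_⟩
    have h1 : ∀ j, eval q.rep (pderiv j F) = 0 := fun j => congrFun h (⟨q, hq⟩, j)
    refine ⟨?_, h1⟩
    have h2 := dv_self (e := d) hF q.rep
    have h3 : dv F q.rep q.rep = 0 := by simp [dv, h1]
    rw [h3] at h2
    have hd0 : (d : k) ≠ 0 := by exact_mod_cast (by omega : d ≠ 0)
    exact (mul_eq_zero.1 h2.symm).resolve_left hd0

lemma h1_eq [CharZero k] {n d : ℕ} (hd : 1 ≤ d) (S : Finset (ProjSpace k n)) :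
    h1 k n d S + Module.finrank k (LinearMap.range (grad n d S)) = (n + 1) * S.card := by
  have h := LinearMap.finrank_range_add_finrank_ker (grad n d S)
  rw [finrank_V] at h
  unfold h1
  rw [h0_eq hd]
  have h' : (Module.finrank k (LinearMap.range (grad n d S)) : ℤ) +
    Module.finrank k (LinearMap.ker (grad n d S)) = ((n + d).choose n : ℕ) := by exact_mod_cast h
  linarith

lemma h1_nonneg [CharZero k] {n d : ℕ} (hd : 1 ≤ d) (S : Finset (ProjSpace k n)) :
    0 ≤ h1 k n d S := by
  have h := h1_eq hd S
  have h2 := Submodule.finrank_le (LinearMap.range (grad n d S))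
  simp at h2
  have h3 : (Module.finrank k (LinearMap.range (grad n d S)) : ℤ) ≤ S.card * (n + 1) := by
    exact_mod_cast h2
  linarith

lemma h1_pos_iff [CharZero k] {n d : ℕ} (hd : 1 ≤ d) (S : Finset (ProjSpace k n)) :
    0 < h1 k n d S ↔ ∃ w : S → Fin (n+1) → k, w ≠ 0 ∧
      ∀ F : MvPolynomial (Fin (n+1)) k, F.IsHomogeneous d → ∑ i, dv F i.1.rep (w i) = 0 := by
  have h := h1_eq hd S
  have hf : Module.finrank k (S × Fin (n+1) → k) = S.card * (n + 1) := by simp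
  constructor
  · intro h0
    have hlt : LinearMap.range (grad n d S) < ⊤ := by
      refine lt_of_le_of_ne le_top fun htop => ?_
      rw [htop, finrank_top, hf] at h
      push_cast at h
      linarith
    obtain ⟨f, hf0, hle⟩ := Submodule.exists_le_ker_of_lt_top _ hlt
    refine ⟨fun i j => f (Pi.single (i, j) 1), ?_, ?_⟩
    · intro h0
      apply hf0
      refine LinearMap.pi_ext' fun x => LinearMap.ext_ring ?_
      exact congrFun (congrFun h0 x.1) x.2
    · intro F hF
      have h1 : f (grad n d S ⟨F, hF⟩) = 0 := hle (LinearMap.mem_range_self _ _)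
      rw [LinearMap.pi_apply_eq_sum_univ f, Fintype.sum_prod_type] at h1
      rw [← h1]
      refine Finset.sum_congr rfl fun i _ => Finset.sum_congr rfl fun j _ => ?_
      have hs : (Pi.single (i, j) 1 : S × Fin (n+1) → k) = fun x => if (i, j) = x then 1 else 0 := by
        funext x
        simp [Pi.single_apply, eq_comm]
      beta_reduce
      rw [smul_eq_mul, mul_comm, hs]
      rfl
  · rintro ⟨w, hw0, hw⟩
    refine lt_of_le_of_ne (h1_nonneg hd S) fun h0 => hw0 ?_
    have htop : LinearMap.range (grad n d S) = ⊤ := by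
      apply Submodule.eq_top_of_finrank_eq
      rw [hf]
      rw [← h0, zero_add] at h
      have : (Module.finrank k (LinearMap.range (grad n d S)) : ℤ) = ((S.card * (n + 1) : ℕ) : ℤ) := by
        rw [h]; push_cast; ring
      exact_mod_cast this
    funext i j
    obtain ⟨F, hF⟩ := LinearMap.range_eq_top.1 htop (Pi.single (i, j) 1)
    have h1 := hw F.1 F.2
    have h2 : ∀ i' j', eval i'.1.rep (pderiv j' F.1) =
        (Pi.single (i, j) 1 : S × Fin (n+1) → k) (i', j') := fun i' j' => congrFun hF (i', j')
    simp only [dv, h2] at h1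
    rw [← Fintype.sum_prod_type' (f := fun a b => w a b * (Pi.single (i, j) 1 : S × Fin (n+1) → k) (a, b))] at h1
    rw [Finset.sum_eq_single (i, j)] at h1
    · simpa using h1
    · intro b _ hb
      have : (b.1, b.2) ≠ (i, j) := hb
      rw [Pi.single_eq_of_ne this, mul_zero]
    · simp

lemma rep_nonprop {n : ℕ} {a b : ProjSpace k n} (h : a ≠ b) :
    b.rep ∉ Submodule.span k {a.rep} := by
  intro hm
  obtain ⟨c, hc⟩ := Submodule.mem_span_singleton.1 hm
  apply h
  have hc0 : c ≠ 0 := by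
    rintro rfl
    exact b.rep_nonzero (by rw [← hc, zero_smul])
  rw [← a.mk_rep, ← b.mk_rep, Projectivization.mk_eq_mk_iff']
  exact ⟨c⁻¹, by rw [← hc, smul_smul, inv_mul_cancel₀ hc0, one_smul]⟩

lemma spans_iff {n : ℕ} (S : Finset (ProjSpace k n)) : Spans k n S ↔
    ∀ l : (Fin (n+1) → k) →ₗ[k] k, l ≠ 0 → ∃ i : S, l i.1.rep ≠ 0 := by
  unfold Spans
  constructor
  · intro h l hl
    by_contra hn
    push Not at hn
    apply hl
    apply LinearMap.ext_on h
    rintro _ ⟨q, hq, rfl⟩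
    exact hn ⟨q, hq⟩
  · intro h
    by_contra hn
    obtain ⟨l, hl, hle⟩ := Submodule.exists_le_ker_of_lt_top _ (lt_of_le_of_ne le_top hn)
    obtain ⟨i, hi⟩ := h l hl
    exact hi (hle (Submodule.subset_span ⟨i.1, i.2, rfl⟩))

/-- relations on subsets -/
lemma h1_sub [CharZero k] {n d : ℕ} (hd : 1 ≤ d) {S A : Finset (ProjSpace k n)} (hA : A ⊆ S) :
    0 < h1 k n d A ↔ ∃ w : S → Fin (n+1) → k, w ≠ 0 ∧ (∀ i, i.1 ∉ A → w i = 0) ∧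
      ∀ F : MvPolynomial (Fin (n+1)) k, F.IsHomogeneous d → ∑ i, dv F i.1.rep (w i) = 0 := by
  rw [h1_pos_iff hd]
  constructor
  · rintro ⟨w, hw0, hw⟩
    refine ⟨fun i => if hi : i.1 ∈ A then w ⟨i.1, hi⟩ else 0, ?_, fun i hi => by simp [hi], ?_⟩
    · intro h0
      apply hw0
      funext i
      have := congrFun h0 ⟨i.1, hA i.2⟩
      simpa using this
    · intro F hF
      rw [← hw F hF]
      symm
      refine Finset.sum_of_injOn (fun i : A => (⟨i.1, hA i.2⟩ : S)) ?_ ?_ ?_ ?_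
      · intro a _ b _ hab
        exact Subtype.ext (congrArg (fun s : S => s.1) hab)
      · intro _ _; simp
      · intro i _ hi
        have : i.1 ∉ A := fun hm => hi ⟨⟨i.1, hm⟩, by simp, rfl⟩
        simp [this, dv_zero_right]
      · intro i _; simp
  · rintro ⟨w, hw0, hwA, hw⟩
    refine ⟨fun i => w ⟨i.1, hA i.2⟩, ?_, ?_⟩
    · intro h0
      apply hw0
      funext i
      by_cases hi : i.1 ∈ A
      · exact congrFun h0 ⟨i.1, hi⟩
      · exact hwA i hi
    · intro F hF
      rw [← hw F hF]
      refine Finset.sum_of_injOn (fun i : A => (⟨i.1, hA i.2⟩ : S)) ?_ ?_ ?_ ?_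
      · intro a _ b _ hab
        exact Subtype.ext (congrArg (fun s : S => s.1) hab)
      · intro _ _; simp
      · intro i _ hi
        have : i.1 ∉ A := fun hm => hi ⟨⟨i.1, hm⟩, by simp, rfl⟩
        simp [hwA i this, dv_zero_right]
      · intro i _; simp

lemma submodule_eq_iff {n : ℕ} (q : ProjSpace k n) (v : Fin (n+1) → k) :
    Projectivization.submodule q = Submodule.span k {v} ↔ ∃ c : k, c ≠ 0 ∧ q.rep = c • v := by
  rw [Projectivization.submodule_eq, Submodule.span_singleton_eq_span_singleton]
  constructor
  · rintro ⟨u, hu⟩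
    refine ⟨(u⁻¹ : kˣ), u⁻¹.ne_zero, ?_⟩
    rw [← hu]
    simp [Units.smul_def, smul_smul]
  · rintro ⟨c, hc, h⟩
    refine ⟨Units.mk0 c⁻¹ (inv_ne_zero hc), ?_⟩
    rw [h, Units.smul_def, Units.val_mk0, smul_smul, inv_mul_cancel₀ hc, one_smul]

theorem forward [CharZero k] {d : ℕ} (hd : 7 ≤ d) (S : Finset (ProjSpace k 3))
    (hS : S ∈ minTerracini k 3 d (1 + (3 * d + 1) / 2)) :
    ∃ C : Set (ProjSpace k 3), IsRNC k 3 C ∧ ↑S ⊆ C := by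
  obtain ⟨⟨hc, hsp, -, hpos⟩, hmin⟩ := hS
  have hF : Fwd (ι := S) d (fun i => i.1.rep) := by
    refine ⟨hd, by simpa using hc, fun i => i.1.rep_nonzero, fun i j hij => rep_nonprop (fun h => hij (Subtype.ext h)),
      (spans_iff S).1 hsp, ?_⟩
    intro B hB w hwB hw
    by_contra hw0
    have hs : B.map (Function.Embedding.subtype _) ⊂ S := by
      rw [Finset.ssubset_iff_of_subset (by
        intro q hq
        obtain ⟨j, -, rfl⟩ := Finset.mem_map.1 hq
        exact j.2)]
      by_contra hn
      push Not at hn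
      apply hB
      rw [Finset.eq_univ_iff_forall]
      intro i
      obtain ⟨j, hj, hji⟩ := Finset.mem_map.1 (hn i.1 i.2)
      rwa [← Subtype.ext (a1 := j) hji]
    have h1 := (h1_sub (d := d) (by omega) hs.1).2 ⟨w, hw0, fun i hi => hwB i fun hm => hi (Finset.mem_map.2 ⟨i, hm, rfl⟩), hw⟩
    rw [hmin _ hs] at h1
    exact lt_irrefl _ h1
  obtain ⟨w, hw0, hw⟩ := (h1_pos_iff (by omega) S).1 hpos
  obtain ⟨g, hg⟩ := hF.main w hw0 hw
  refine ⟨_, ⟨g, rfl⟩, fun q hq => ?_⟩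
  obtain ⟨s, t, c, hc, hst, h⟩ := hg ⟨q, hq⟩
  exact ⟨s, t, hst, (submodule_eq_iff _ _).2 ⟨c, hc, h⟩⟩

end

end Terr

open MvPolynomial

namespace Terr

open scoped Classical

noncomputable section

set_option linter.unusedSectionVars false

variable {k : Type*} [Field k] {ι : Type*} [Fintype ι]

/-- cubic monomials in two variables -/
def cm (m : Fin 4) : MvPolynomial (Fin 2) k := X 0 ^ (3 - (m : ℕ)) * X 1 ^ (m : ℕ)

lemma cm_hom (m : Fin 4) : (cm m : MvPolynomial (Fin 2) k).IsHomogeneous 3 := by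
  have := ((isHomogeneous_X k (0 : Fin 2)).pow (3 - (m : ℕ))).mul ((isHomogeneous_X k (1 : Fin 2)).pow (m : ℕ))
  rwa [show 1 * (3 - (m : ℕ)) + 1 * m = 3 by omega] at this

lemma eval_cm (r : Fin 2 → k) (m : Fin 4) : eval r (cm m) = stdRNCvec k 3 (r 0) (r 1) m := by
  simp [cm, stdRNCvec]

/-- components of the parametrization -/
def Phi (g : (Fin 4 → k) ≃ₗ[k] (Fin 4 → k)) (j : Fin 4) : MvPolynomial (Fin 2) k :=
  ∑ m, C (g (Pi.single m 1) j) * cm m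

lemma Phi_hom (g : (Fin 4 → k) ≃ₗ[k] (Fin 4 → k)) (j : Fin 4) : (Phi g j).IsHomogeneous 3 := by
  refine IsHomogeneous.sum _ _ _ fun m _ => ?_
  have := (isHomogeneous_C (Fin 2) (g (Pi.single m 1) j)).mul (cm_hom m)
  simpa using this

/-- The parametrization -/
def par (g : (Fin 4 → k) ≃ₗ[k] (Fin 4 → k)) (r : Fin 2 → k) : Fin 4 → k :=
  g (stdRNCvec k 3 (r 0) (r 1))

/-- The differential of the parametrization -/
def dpar (g : (Fin 4 → k) ≃ₗ[k] (Fin 4 → k)) (r v : Fin 2 → k) : Fin 4 → k :=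
  g (fun m => dv (cm m) r v)

lemma g_apply (g : (Fin 4 → k) ≃ₗ[k] (Fin 4 → k)) (u : Fin 4 → k) (j : Fin 4) :
    ∑ m, g (Pi.single m 1) j * u m = g u j :=
  lin_apply_aux ((LinearMap.proj j).comp g.toLinearMap) u

lemma eval_Phi (g : (Fin 4 → k) ≃ₗ[k] (Fin 4 → k)) (r : Fin 2 → k) (j : Fin 4) :
    eval r (Phi g j) = par g r j := by
  rw [par, ← g_apply]
  simp [Phi, eval_cm]

lemma dv_Phi (g : (Fin 4 → k) ≃ₗ[k] (Fin 4 → k)) (r v : Fin 2 → k) (j : Fin 4) :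
    dv (Phi g j) r v = dpar g r v j := by
  rw [dpar, ← g_apply, Phi, dv_sum]
  exact Finset.sum_congr rfl fun m _ => by rw [dv_mul, dv_C]; simp

/-- pullback of forms -/
def pb (g : (Fin 4 → k) ≃ₗ[k] (Fin 4 → k)) : MvPolynomial (Fin 4) k →ₐ[k] MvPolynomial (Fin 2) k :=
  aeval (Phi g)

lemma pb_hom (g : (Fin 4 → k) ≃ₗ[k] (Fin 4 → k)) {F : MvPolynomial (Fin 4) k} {d : ℕ}
    (hF : F.IsHomogeneous d) : (pb g F).IsHomogeneous (3 * d) :=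
  hF.aeval _ (Phi_hom g)

lemma eval_pb (g : (Fin 4 → k) ≃ₗ[k] (Fin 4 → k)) (F : MvPolynomial (Fin 4) k) (r : Fin 2 → k) :
    eval r (pb g F) = eval (par g r) F := by
  induction F using MvPolynomial.induction_on with
  | C a => simp [pb]
  | add F G hF hG => simp [hF, hG]
  | mul_X F i hF => simp [hF, pb, eval_Phi]; left; rw [← hF]; rfl

lemma dv_pb (g : (Fin 4 → k) ≃ₗ[k] (Fin 4 → k)) (F : MvPolynomial (Fin 4) k) (r v : Fin 2 → k) :
    dv (pb g F) r v = dv F (par g r) (dpar g r v) := by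
  induction F using MvPolynomial.induction_on with
  | C a => 
    have : pb g (C a) = C a := by simp [pb]
    rw [this, dv_C, dv_C]
  | add F G hF hG => rw [map_add, dv_add, dv_add, hF, hG]
  | mul_X F i hF =>
    have : pb g (X i) = Phi g i := by simp [pb]
    rw [map_mul, dv_mul, dv_mul, hF, eval_pb, eval_pb, this, dv_X, dv_Phi]

lemma pb_co (g : (Fin 4 → k) ≃ₗ[k] (Fin 4 → k)) (m : Fin 4) : pb g (lin (co g m)) = cm m := by
  have h1 : pb g (lin (co g m)) = ∑ m', C (co g m (g (Pi.single m' 1))) * cm m' := by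
    simp only [lin, map_sum, map_mul]
    have h2 : ∀ j, pb g (X j) = Phi g j := fun j => by simp [pb]
    have h3 : ∀ a, pb g (C a) = C a := fun a => by simp [pb]
    simp only [h2, h3, Phi, Finset.mul_sum]
    rw [Finset.sum_comm]
    refine Finset.sum_congr rfl fun m' _ => ?_
    rw [← lin_apply_aux (co g m), map_sum, Finset.sum_mul]
    exact Finset.sum_congr rfl fun j _ => by rw [map_mul, mul_assoc]
  rw [h1]
  simp only [co_apply, LinearEquiv.symm_apply_apply]
  rw [Finset.sum_eq_single m]
  · simp
  · intro b _ hb; simp [Ne.symm hb]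
  · simp

lemma pb_mon (g : (Fin 4 → k) ≃ₗ[k] (Fin 4 → k)) (d : ℕ) : ∀ a b : ℕ, a + b = 3 * d →
    ∃ F : MvPolynomial (Fin 4) k, F.IsHomogeneous d ∧ pb g F = X 0 ^ a * X 1 ^ b := by
  induction d with
  | zero =>
    intro a b h
    refine ⟨1, isHomogeneous_one _ _, ?_⟩
    rw [show a = 0 by omega, show b = 0 by omega]; simp
  | succ d ih =>
    intro a b h
    obtain ⟨m, hm1, hm2⟩ : ∃ m : Fin 4, 3 - (m : ℕ) ≤ a ∧ (m : ℕ) ≤ b :=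
      ⟨⟨min b 3, by omega⟩, by simp only; omega, by simp only; omega⟩
    obtain ⟨F, hF, hFe⟩ := ih (a - (3 - m)) (b - m) (by omega)
    refine ⟨F * lin (co g m), hF.mul (lin_hom _), ?_⟩
    rw [map_mul, hFe, pb_co, cm]
    conv_rhs => rw [show a = a - (3 - m) + (3 - m) by omega, show b = b - m + m by omega, pow_add, pow_add]
    ring

lemma pb_surj (g : (Fin 4 → k) ≃ₗ[k] (Fin 4 → k)) {d : ℕ} {G : MvPolynomial (Fin 2) k}
    (hG : G.IsHomogeneous (3 * d)) : ∃ F : MvPolynomial (Fin 4) k, F.IsHomogeneous d ∧ pb g F = G := by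
  have h1 : ∀ s ∈ G.support, ∃ F : MvPolynomial (Fin 4) k, F.IsHomogeneous d ∧
      pb g F = monomial s (coeff s G) := by
    intro s hs
    have h2 := hG (mem_support_iff.1 hs)
    obtain ⟨F, hF, hFe⟩ := pb_mon g d (s 0) (s 1) (by
      rw [← h2, Finsupp.weight_apply, Finsupp.sum_fintype _ _ (by simp)]
      simp [Fin.sum_univ_two])
    refine ⟨C (coeff s G) * F, by simpa using (isHomogeneous_C (Fin 4) (coeff s G)).mul hF, ?_⟩
    rw [map_mul, hFe, monomial_eq, Finsupp.prod_fintype _ _ (by simp), Fin.prod_univ_two]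
    simp [pb]
  choose! F hF hFe using h1
  refine ⟨∑ s ∈ G.support, F s, IsHomogeneous.sum _ _ _ hF, ?_⟩
  rw [map_sum, Finset.sum_congr rfl hFe]
  exact G.support_sum_monomial_coeff

lemma dcm0 (r v : Fin 2 → k) : dv (cm 0) r v = 3 * r 0 ^ 2 * v 0 := by
  simp [cm, dv, Fin.sum_univ_two, pderiv_X, Pi.single_apply]; ring
lemma dcm1 (r v : Fin 2 → k) : dv (cm 1) r v = 2 * r 0 * r 1 * v 0 + r 0 ^ 2 * v 1 := by
  simp [cm, dv, Fin.sum_univ_two, pderiv_X, Pi.single_apply]; ring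
lemma dcm2 (r v : Fin 2 → k) : dv (cm 2) r v = r 1 ^ 2 * v 0 + 2 * r 0 * r 1 * v 1 := by
  simp [cm, dv, Fin.sum_univ_two, pderiv_X, Pi.single_apply]; ring
lemma dcm3 (r v : Fin 2 → k) : dv (cm 3) r v = 3 * r 1 ^ 2 * v 1 := by
  simp [cm, dv, Fin.sum_univ_two, pderiv_X, Pi.single_apply]; ring

lemma dpar_inj [CharZero k] {g : (Fin 4 → k) ≃ₗ[k] (Fin 4 → k)} {r v : Fin 2 → k} (hr : r ≠ 0)
    (h : dpar g r v = 0) : v = 0 := by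
  have h1 : (fun m => dv (cm m) r v) = 0 := by simpa [dpar] using h
  have e0 := congrFun h1 0
  have e1 := congrFun h1 1
  have e2 := congrFun h1 2
  have e3 := congrFun h1 3
  simp only [dcm0, dcm1, dcm2, dcm3, Pi.zero_apply] at e0 e1 e2 e3
  have hz : v 0 = 0 ∧ v 1 = 0 := by
    by_cases hs : r 0 = 0
    · have ht : r 1 ≠ 0 := by
        intro ht; apply hr; ext i; fin_cases i <;> assumption
      have hv : v 1 = 0 := by simpa [ht] using e3
      refine ⟨?_, hv⟩
      rw [hv] at e2
      simpa [ht] using e2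
    · have hv : v 0 = 0 := by simpa [hs] using e0
      refine ⟨hv, ?_⟩
      rw [hv] at e1
      simpa [hs] using e1
  ext i; fin_cases i
  · exact hz.1
  · exact hz.2

lemma dv_quad (g : (Fin 4 → k) ≃ₗ[k] (Fin 4 → k)) (a b c e : Fin 4) (p w : Fin 4 → k) :
    dv (quad g a b c e) p w = g.symm w a * g.symm p b + g.symm p a * g.symm w b
      - (g.symm w c * g.symm p e + g.symm p c * g.symm w e) := by
  rw [quad, sub_eq_add_neg, ← neg_one_smul k, dv_add, dv_smul, dv_mul, dv_mul]
  simp only [dv_lin, eval_lin, co_apply]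
  ring

lemma tangent [CharZero k] {g : (Fin 4 → k) ≃ₗ[k] (Fin 4 → k)} {r : Fin 2 → k} (hr : r ≠ 0)
    {w : Fin 4 → k} (h : ∀ a b c e : Fin 4, (a : ℕ) + b = c + e → dv (quad g a b c e) (par g r) w = 0) :
    ∃ v, w = dpar g r v := by
  obtain ⟨y, rfl⟩ := g.surjective w
  have h1 := h 0 2 1 1 (by decide)
  have h2 := h 1 3 2 2 (by decide)
  have h3 := h 0 3 1 2 (by decide)
  simp only [dv_quad, par, LinearEquiv.symm_apply_apply, ← eval_cm] at h1 h2 h3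
  simp [cm] at h1 h2 h3
  suffices H : ∃ v0 v1 : k, y 0 = 3 * r 0 ^ 2 * v0 ∧ y 1 = 2 * r 0 * r 1 * v0 + r 0 ^ 2 * v1 ∧
      y 2 = r 1 ^ 2 * v0 + 2 * r 0 * r 1 * v1 ∧ y 3 = 3 * r 1 ^ 2 * v1 by
    obtain ⟨v0, v1, e0, e1, e2, e3⟩ := H
    refine ⟨![v0, v1], ?_⟩
    rw [dpar]
    congr 1
    ext m
    fin_cases m
    · change _ = dv (cm 0) _ _; rw [dcm0]; simpa using e0
    · change _ = dv (cm 1) _ _; rw [dcm1]; simpa using e1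
    · change _ = dv (cm 2) _ _; rw [dcm2]; simpa using e2
    · change _ = dv (cm 3) _ _; rw [dcm3]; simpa using e3
  have hst : r 0 ≠ 0 ∨ r 1 ≠ 0 := by
    by_contra hn
    push Not at hn
    apply hr; ext i; fin_cases i
    · exact hn.1
    · exact hn.2
  generalize r 0 = s at *
  generalize r 1 = t at *
  rcases hst with hs | ht
  · obtain ⟨v0, e0⟩ : ∃ v0, y 0 = 3 * s ^ 2 * v0 := ⟨y 0 / (3 * s ^ 2), by field_simp⟩
    obtain ⟨v1, e1⟩ : ∃ v1, y 1 = 2 * s * t * v0 + s ^ 2 * v1 :=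
      ⟨(y 1 - 2 * s * t * v0) / s ^ 2, by field_simp; ring⟩
    have e2 : y 2 = t ^ 2 * v0 + 2 * s * t * v1 := by
      apply mul_left_cancel₀ (pow_ne_zero 3 hs)
      rw [e0, e1] at h1
      linear_combination h1
    refine ⟨v0, v1, e0, e1, e2, ?_⟩
    apply mul_left_cancel₀ (pow_ne_zero 3 hs)
    rw [e0, e1, e2] at h3
    linear_combination h3
  · obtain ⟨v1, e3⟩ : ∃ v1, y 3 = 3 * t ^ 2 * v1 := ⟨y 3 / (3 * t ^ 2), by field_simp⟩
    obtain ⟨v0, e2⟩ : ∃ v0, y 2 = t ^ 2 * v0 + 2 * s * t * v1 :=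
      ⟨(y 2 - 2 * s * t * v1) / t ^ 2, by field_simp; ring⟩
    have e1 : y 1 = 2 * s * t * v0 + s ^ 2 * v1 := by
      apply mul_left_cancel₀ (pow_ne_zero 3 ht)
      rw [e2, e3] at h2
      linear_combination h2
    refine ⟨v0, v1, ?_, e1, e2, e3⟩
    apply mul_left_cancel₀ (pow_ne_zero 3 ht)
    rw [e1, e2, e3] at h3
    linear_combination h3

end

end Terr

open MvPolynomial

namespace Terr

open scoped Classical

noncomputable section

set_option linter.unusedSectionVars false

variable {k : Type*} [Field k] {ι : Type*} [Fintype ι]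

lemma onCubic_par (g : (Fin 4 → k) ≃ₗ[k] (Fin 4 → k)) {r : Fin 2 → k} (hr : r ≠ 0) :
    OnCubic g (par g r) := by
  refine ⟨r 0, r 1, 1, one_ne_zero, ?_, by rw [one_smul]; rfl⟩
  by_contra hn
  push Not at hn
  apply hr; ext i; fin_cases i
  · exact hn.1
  · exact hn.2

lemma bwd_min [CharZero k] {g : (Fin 4 → k) ≃ₗ[k] (Fin 4 → k)} {r : ι → Fin 2 → k}
    (hr : ∀ i, r i ≠ 0) (hnp : ∀ i j, i ≠ j → r j ∉ Submodule.span k {r i}) {d : ℕ} (hd : 7 ≤ d)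
    (hc : 2 * Fintype.card ι ≤ 3 * d + 1) (w : ι → Fin 4 → k)
    (hw : ∀ F : MvPolynomial (Fin 4) k, F.IsHomogeneous d → ∑ i, dv F (par g (r i)) (w i) = 0) :
    w = 0 := by
  have hq : ∀ a b c e : Fin 4, (a : ℕ) + b = c + e → ∀ i,
      dv (quad g a b c e) (par g (r i)) (w i) = 0 := by
    intro a b c e habce
    let Z : ι → k × (Fin 2 → k) := fun i => (dv (quad g a b c e) (par g (r i)) (w i), 0)
    have hv : Valid r Z := ⟨hr, hnp, fun i hi => absurd rfl hi⟩
    have hrel : Rel (3 * (d - 2)) r Z := by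
      intro G hG
      obtain ⟨F, hF, rfl⟩ := pb_surj g hG
      have h2 := hw (F * quad g a b c e) (by
        have := hF.mul (quad_hom g a b c e)
        rwa [show d - 2 + 2 = d by omega] at this)
      rw [← h2]
      refine Finset.sum_congr rfl fun i _ => ?_
      rw [dv_mul, onCubic_quad (onCubic_par g (hr i)) habce, eval_pb]
      simp only [Z, dv_zero_right]
      ring
    have hD : D Z ≤ Fintype.card ι := by
      unfold D
      calc ∑ i, cdeg (Z i) ≤ ∑ i : ι, 1 := Finset.sum_le_sum fun i _ => by
            simp only [Z, cdeg]; split_ifs <;> simp_all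
        _ = _ := by simp
    have h0 : D Z = 0 := by
      by_contra hne
      have := lemma0 (le_refl 2) _ hv hrel (Nat.pos_of_ne_zero hne)
      omega
    intro i
    have := D_eq_zero.1 h0 i
    exact congrArg Prod.fst this
  have ht : ∀ i, ∃ v, w i = dpar g (r i) v := fun i =>
    tangent (hr i) fun a b c e h => hq a b c e h i
  choose v hv using ht
  have hvr : ∀ G : MvPolynomial (Fin 2) k, G.IsHomogeneous (3 * d) → ∑ i, dv G (r i) (v i) = 0 := by
    intro G hG
    obtain ⟨F, hF, rfl⟩ := pb_surj g hG
    rw [← hw F hF]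
    exact Finset.sum_congr rfl fun i _ => by rw [dv_pb, hv i]
  obtain ⟨Z, hZv, hZr, hZ⟩ := normZ (by omega) hr hnp v hvr
  have hD : D Z ≤ 2 * Fintype.card ι := by
    unfold D
    calc ∑ i, cdeg (Z i) ≤ ∑ i : ι, 2 := Finset.sum_le_sum fun i _ => cdeg_le_two _
      _ = _ := by simp [mul_comm]
  have h0 : D Z = 0 := by
    by_contra hne
    have := lemma0 (le_refl 2) _ hZv hZr (Nat.pos_of_ne_zero hne)
    omega
  funext i
  rw [hv i, (hZ i).2 (D_eq_zero.1 h0 i), dpar]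
  have : (fun m => dv (cm m) (r i) 0) = 0 := funext fun m => dv_zero_right _ _
  rw [this, map_zero]; rfl

lemma bwd_rel [CharZero k] {g : (Fin 4 → k) ≃ₗ[k] (Fin 4 → k)} {r : ι → Fin 2 → k}
    (hr : ∀ i, r i ≠ 0) {d : ℕ} (hc : 3 * d + 2 ≤ 2 * Fintype.card ι) :
    ∃ w : ι → Fin 4 → k, w ≠ 0 ∧
      ∀ F : MvPolynomial (Fin 4) k, F.IsHomogeneous d → ∑ i, dv F (par g (r i)) (w i) = 0 := by
  let φ0 : MvPolynomial (Fin 2) k →ₗ[k] (ι × Fin 2 → k) :=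
    LinearMap.pi fun q => (aeval (r q.1)).toLinearMap.comp (pderiv q.2).toLinearMap
  let V := homogeneousSubmodule (Fin 2) k (3 * d)
  have hfr : Module.finrank k V = 3 * d + 1 := by
    have := finrank_V (k := k) 1 (3 * d)
    rw [Nat.choose_one_right] at this
    rw [add_comm]; exact this
  haveI : FiniteDimensional k V := Module.finite_of_finrank_pos (by omega)
  obtain ⟨c, hc0, hcr⟩ := exists_dep (φ0.comp V.subtype) ⊥ bot_le (by
    rw [hfr]; simp; omega)
  refine ⟨fun i => dpar g (r i) (fun j => c (i, j)), ?_, ?_⟩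
  · intro h
    apply hc0
    funext ⟨i, j⟩
    have := dpar_inj (hr i) (congrFun h i)
    exact congrFun this j
  · intro F hF
    have := hcr ⟨pb g F, (mem_homogeneousSubmodule _ _).2 (pb_hom g hF)⟩
    rw [← this, Fintype.sum_prod_type]
    refine Finset.sum_congr rfl fun i _ => ?_
    rw [← dv_pb, dv]
    refine Finset.sum_congr rfl fun j _ => ?_
    simp [φ0, aeval_def, eval₂_eq_eval_map]

lemma bwd_span {g : (Fin 4 → k) ≃ₗ[k] (Fin 4 → k)} {r : ι → Fin 2 → k} (hr : ∀ i, r i ≠ 0)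
    (hnp : ∀ i j, i ≠ j → r j ∉ Submodule.span k {r i}) (hc : 4 ≤ Fintype.card ι)
    (l : (Fin 4 → k) →ₗ[k] k) (hl : ∀ i, l (par g (r i)) = 0) : l = 0 := by
  obtain ⟨a⟩ : Nonempty (Fin 4 ↪ ι) := Function.Embedding.nonempty_of_card_le (by simpa using hc)
  have hdet : (Matrix.projVandermonde (fun m => r (a m) 1) (fun m => r (a m) 0)).det ≠ 0 := by
    rw [Matrix.det_projVandermonde]
    refine Finset.prod_ne_zero_iff.2 fun i _ => Finset.prod_ne_zero_iff.2 fun j hj => ?_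
    intro h0
    have hij : a i ≠ a j := fun h => (Finset.mem_Ioi.1 hj).ne (a.injective h)
    apply hnp _ _ hij
    rw [Submodule.mem_span_singleton]
    by_cases hs : r (a i) 0 = 0
    · have ht : r (a i) 1 ≠ 0 := by
        intro ht; apply hr (a i); ext m; fin_cases m <;> assumption
      refine ⟨r (a j) 1 / r (a i) 1, ?_⟩
      ext m; fin_cases m
      · simp only [Pi.smul_apply, smul_eq_mul]
        rw [div_mul_eq_mul_div, div_eq_iff ht]
        change r (a j) 1 * r (a i) 0 = r (a j) 0 * r (a i) 1
        linear_combination h0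
      · simp only [Pi.smul_apply, smul_eq_mul]
        rw [div_mul_eq_mul_div, div_eq_iff ht]; simp
    · refine ⟨r (a j) 0 / r (a i) 0, ?_⟩
      ext m; fin_cases m
      · simp only [Pi.smul_apply, smul_eq_mul]
        rw [div_mul_eq_mul_div, div_eq_iff hs]; simp
      · simp only [Pi.smul_apply, smul_eq_mul]
        rw [div_mul_eq_mul_div, div_eq_iff hs]
        change r (a j) 0 * r (a i) 1 = r (a j) 1 * r (a i) 0
        linear_combination -h0
  have hli := Matrix.linearIndependent_rows_of_det_ne_zero hdet
  have h2 := li_dual hli (l.comp g.toLinearMap) (by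
    intro j
    rw [← hl (a j)]
    simp only [LinearMap.comp_apply, par, LinearEquiv.coe_coe]
    congr 2
    ext m
    simp only [Matrix.row, Matrix.projVandermonde_apply, stdRNCvec]
    rw [mul_comm, Fin.val_rev]
    congr 2
    omega)
  ext x
  have := LinearMap.congr_fun h2 (g.symm (Pi.single x 1))
  simpa using this

/-- parametrization of points of a rational normal curve -/
lemma exists_par [IsAlgClosed k] {g : (Fin 4 → k) ≃ₗ[k] (Fin 4 → k)} {q : ProjSpace k 3}
    (h : ∃ s t : k, (s ≠ 0 ∨ t ≠ 0) ∧
      Projectivization.submodule q = Submodule.span k {g (stdRNCvec k 3 s t)}) :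
    ∃ r : Fin 2 → k, r ≠ 0 ∧ q.rep = par g r := by
  obtain ⟨s, t, hst, h⟩ := h
  obtain ⟨c, hc, hq⟩ := (submodule_eq_iff q _).1 h
  obtain ⟨ρ, hρ⟩ := IsAlgClosed.exists_pow_nat_eq c (n := 3) (by norm_num)
  have h2 : q.rep = par g ![ρ * s, ρ * t] := by
    rw [hq, par, ← map_smul]
    congr 1
    ext m
    simp only [Pi.smul_apply, smul_eq_mul, stdRNCvec, ← hρ]
    fin_cases m <;> simp <;> ring
  refine ⟨_, ?_, h2⟩
  intro h0
  apply q.rep_nonzero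
  rw [h2, h0, par]
  have : stdRNCvec k 3 ((0 : Fin 2 → k) 0) ((0 : Fin 2 → k) 1) = 0 := by
    ext m; simp only [stdRNCvec]; fin_cases m <;> simp
  rw [this, map_zero]

lemma par_smul (g : (Fin 4 → k) ≃ₗ[k] (Fin 4 → k)) (r : Fin 2 → k) (c : k) :
    par g (c • r) = c ^ 3 • par g r := by
  rw [par, par, ← map_smul]
  congr 1
  ext m
  simp only [Pi.smul_apply, smul_eq_mul, stdRNCvec]
  fin_cases m <;> simp <;> ring

theorem backward [IsAlgClosed k] [CharZero k] {d : ℕ} (hd : 7 ≤ d) (S : Finset (ProjSpace k 3))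
    (hcard : S.card = 1 + (3 * d + 1) / 2) {C : Set (ProjSpace k 3)} (hC : IsRNC k 3 C)
    (hS : ↑S ⊆ C) : S ∈ minTerracini k 3 d (1 + (3 * d + 1) / 2) := by
  obtain ⟨g, rfl⟩ := hC
  have hex : ∀ q : ProjSpace k 3, q ∈ S → ∃ r : Fin 2 → k, r ≠ 0 ∧ q.rep = par g r :=
    fun q hq => exists_par (hS hq)
  choose! r hr hrep using hex
  have hnp : ∀ a ∈ S, ∀ b ∈ S, a ≠ b → r b ∉ Submodule.span k {r a} := by
    intro a ha b hb hab hm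
    obtain ⟨c, hc⟩ := Submodule.mem_span_singleton.1 hm
    apply rep_nonprop hab
    rw [hrep b hb, ← hc, par_smul, ← hrep a ha]
    exact Submodule.smul_mem _ _ (Submodule.mem_span_singleton_self _)
  have hpos : 0 < h1 k 3 d S := by
    rw [h1_pos_iff (by omega)]
    obtain ⟨w, hw0, hw⟩ := bwd_rel (g := g) (r := fun i : S => r i.1) (fun i => hr _ i.2) (d := d)
      (by rw [Fintype.card_coe]; omega)
    refine ⟨w, hw0, fun F hF => ?_⟩
    rw [← hw F hF]
    exact Finset.sum_congr rfl fun i _ => by rw [hrep _ i.2]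
  refine ⟨⟨hcard, ?_, ?_, hpos⟩, ?_⟩
  · rw [spans_iff]
    intro l hl
    by_contra hn
    push Not at hn
    apply hl
    refine bwd_span (g := g) (r := fun i : S => r i.1) (fun i => hr _ i.2)
      (fun i j hij => hnp _ i.2 _ j.2 fun h => hij (Subtype.ext h)) (by rw [Fintype.card_coe]; omega) l ?_
    intro i
    rw [← hrep _ i.2]; exact hn i
  · unfold h1 at hpos
    have h3 := choose3 d
    have h4 : 4 * S.card ≤ (3 + d).choose 3 := by
      have : 24 * S.card ≤ (d + 1) * (d + 2) * (d + 3) := by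
        have h5 : 24 * S.card ≤ 36 * (d + 1) := by omega
        nlinarith [Nat.mul_le_mul (show 6 ≤ d + 2 by omega) (show 6 ≤ d + 3 by omega)]
      omega
    have h6 : (4 * S.card : ℤ) ≤ ((3 + d).choose 3 : ℕ) := by exact_mod_cast h4
    push_cast at hpos h6
    have : (0 : ℤ) < h0 k 3 d S := by linarith
    exact_mod_cast this
  · intro A hA
    have hlt := Finset.card_lt_card hA
    by_contra hne
    have hp : 0 < h1 k 3 d A := lt_of_le_of_ne (h1_nonneg (by omega) A) (Ne.symm hne)
    obtain ⟨w, hw0, hw⟩ := (h1_pos_iff (by omega) A).1 hp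
    apply hw0
    refine bwd_min (g := g) (r := fun i : A => r i.1) (fun i => hr _ (hA.1 i.2))
      (fun i j hij => hnp _ (hA.1 i.2) _ (hA.1 j.2) fun h => hij (Subtype.ext h)) hd
      (by rw [Fintype.card_coe]; omega) w ?_
    intro F hF
    rw [← hw F hF]
    exact Finset.sum_congr rfl fun i _ => by rw [hrep _ (hA.1 i.2)]

end

end Terr

theorem minTerracini_P3_first_case
    (k : Type*) [Field k] [IsAlgClosed k] [CharZero k]
    (d : ℕ) (hd : 7 ≤ d)
    (S : Finset (ProjSpace k 3)) (hcard : S.card = 1 + (3 * d + 1) / 2) :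
    S ∈ minTerracini k 3 d (1 + (3 * d + 1) / 2) ↔
      ∃ C : Set (ProjSpace k 3), IsRNC k 3 C ∧ ↑S ⊆ C := by
  constructor
  · exact fun hS => Terr.forward hd S hS
  · rintro ⟨C, hC, hS⟩
    exact Terr.backward hd S hcard hC hS
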